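/- Let Γ be a finite connected simple graph with at least one edge and let n ≥ 4. The graph n-braid group B_n(Γ) is isomorphic to a free group if and only if Γ has at most one vertex of degree at least 3 (equivalently, Γ is homeomorphic to an elementary bunch of grapes, i.e. to a star with some 3-cycles attached at its central vertex, or to a path, or to a cycle). -/

import Mathlib

/-!
Both directions rest on the same covering of the unordered configuration space of a graph by two
open sets attached to a vertex `v`: the configurations avoiding `v`, and the configurations having
one particle strictly closest to `v` (and in the open star of `v`).

*At most one essential vertex implies free.* Let `v` be the essential vertex, or any vertex if there
is none. Away from `v` all degrees are at most two, so the graph minus `v` is a disjoint union of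
intervals and embeds in the line (`exists_labelling`, `free_of_degree`). Particles on a line are
sorted, so straight-line homotopies show that any two paths with the same endpoints inside
configurations avoiding `v` are homotopic. The same holds for configurations with a unique closest
particle, after contracting that particle to `v` (`free_of_chart`). A locally path connected space
covered by two such thin open sets has free fundamental group, by a van Kampen argument phrased
with the holonomy of a covering with fibre the free group on the path components of the
intersection (`free_of_thin_cover`, `exists_holonomy`).

*Two essential vertices imply not free.* Near a vertex `v` with three edges, two particles can
perform a loop made of six moves: a particle passes through `v` from one edge to another, or the two
particles exchange their distances from `v` (`exists_exchange_loop`). Labelling the edges at `v` by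
elements of a free group gives a homomorphism from the braid group which records the passages
through `v` (`exists_star_holonomy`); its value on the loop is a commutator of two free generators.
With four particles, such loops `α` at `v` and `β` at `v'` can be performed independently, so they
commute (`commute_of_prod`). The holonomy at `v` is nontrivial on `α` and trivial on `β`, while the
one at `v'` is nontrivial on `β`. In a free group commuting elements are powers of a common element,
and the free target is torsion free, which is contradictory (`not_free_of_commute`). The base point
plays no role because the configuration space is path connected (`joined_uconf`).
-/

open scoped Classical

noncomputable section

namespace GraphBraid

/-- The standard basis vector `e_v` in `ℝ^V`. -/
def basisVec {V : Type} [DecidableEq V] (v : V) : V → ℝ := fun w => if w = v then 1 else 0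

/-- The geometric realization of a simple graph, as the subspace of `ℝ^V` given by the
union over the edges of the straight segments joining the corresponding basis vectors. -/
def realization {V : Type} [DecidableEq V] (G : SimpleGraph V) : Set (V → ℝ) :=
  ⋃ (u : V) (v : V) (_ : G.Adj u v), segment ℝ (basisVec u) (basisVec v)

/-- The realization of a subgraph, as a subspace of `ℝ^V`. -/
def subRealization {V : Type} [DecidableEq V] {G : SimpleGraph V} (H : G.Subgraph) :
    Set (V → ℝ) :=
  ⋃ (u : V) (v : V) (_ : H.Adj u v), segment ℝ (basisVec u) (basisVec v)

/-- The ordered `n`-point configuration space of a topological space. -/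
abbrev Conf (n : ℕ) (X : Type) [TopologicalSpace X] : Type :=
  {f : Fin n → X // Function.Injective f}

/-- Two ordered configurations are related when they differ by a permutation of coordinates. -/
def permRel (n : ℕ) (X : Type) [TopologicalSpace X] (f g : Conf n X) : Prop :=
  ∃ σ : Equiv.Perm (Fin n), (f : Fin n → X) = (g : Fin n → X) ∘ σ

/-- The unordered `n`-point configuration space: the quotient of the ordered configuration
space by the symmetric group permuting coordinates. -/
abbrev UConf (n : ℕ) (X : Type) [TopologicalSpace X] : Type :=
  Quot (permRel n X)

/-- A group is free when it is isomorphic to `FreeGroup S` for some set `S`. -/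
def IsFreeGroupType (G : Type*) [Group G] : Prop :=
  ∃ S : Type, Nonempty (G ≃* FreeGroup S)

/-- A cycle subgraph: a subgraph with at least one edge which is connected and all of whose
vertices have degree exactly two (inside the subgraph). -/
def IsCycleSubgraph {W : Type*} {G : SimpleGraph W} (H : G.Subgraph) : Prop :=
  H.edgeSet.Nonempty ∧ H.Connected ∧ ∀ v ∈ H.verts, (H.neighborSet v).ncard = 2

section Auxiliary

open Topology unitInterval

/-! ### Holonomy of locally trivialised flat data -/

/-- Induction principle for homotopy classes of paths: a property of classes that is stable under
concatenation and holds for every path inside a member of an open cover holds for every class. -/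
theorem path_cover_induction {X : Type*} [TopologicalSpace X] {ι : Type*} {U : ι → Set X}
    (hU : ∀ i, IsOpen (U i)) (hcov : ∀ x, ∃ i, x ∈ U i)
    (Q : ∀ {x y : X}, Path.Homotopic.Quotient x y → Prop)
    (hsmall : ∀ (i : ι) {x y : X} (γ : Path x y), (∀ t, γ t ∈ U i) →
      Q (Path.Homotopic.Quotient.mk γ))
    (htrans : ∀ {x y z : X} (p : Path.Homotopic.Quotient x y) (q : Path.Homotopic.Quotient y z),
      Q p → Q q → Q (p.trans q))
    {x y : X} (p : Path.Homotopic.Quotient x y) : Q p := by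
  induction p using Path.Homotopic.Quotient.ind with
  | _ γ =>
  obtain ⟨t, ht0, hmono, ⟨m, hm⟩, hsub⟩ :=
    exists_monotone_Icc_subset_open_cover_unitInterval (ι := ι) (c := fun i => γ ⁻¹' U i)
      (fun i => (hU i).preimage γ.continuous) (by
        intro s _
        obtain ⟨i, hi⟩ := hcov (γ s)
        exact Set.mem_iUnion.2 ⟨i, hi⟩)
  have key : ∀ k, Q (Path.Homotopic.Quotient.mk (γ.subpath 0 (t k))) := by
    intro k
    induction k with
    | zero =>
      obtain ⟨i, hi⟩ := hcov (γ 0)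
      refine hsmall i _ ?_
      intro s
      rw [ht0, Path.subpath_self]
      exact hi
    | succ k ih =>
      obtain ⟨i, hi⟩ := hsub k
      have h2 : Q (Path.Homotopic.Quotient.mk (γ.subpath (t k) (t (k+1)))) := by
        refine hsmall i _ ?_
        intro s
        have : (γ.subpath (t k) (t (k+1))) s ∈ Set.range (γ.subpath (t k) (t (k+1))) := ⟨s, rfl⟩
        rw [Path.range_subpath_of_le _ _ _ (hmono (Nat.le_succ k))] at this
        obtain ⟨r, hr, hr'⟩ := this
        rw [← hr']
        exact hi hr
      have h3 := htrans _ _ ih h2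
      rw [← Path.Homotopic.Quotient.mk_trans] at h3
      rwa [Path.Homotopic.Quotient.eq.2 ⟨Path.Homotopy.subpathTransSubpath γ 0 (t k) (t (k+1))⟩] at h3
  have h1 := key m
  rw [hm m le_rfl, Path.subpath_zero_one] at h1
  have gen : ∀ {x' y' : X} (hx : x' = x) (hy : y' = y),
      Q (Path.Homotopic.Quotient.mk (γ.cast hx hy)) → Q (Path.Homotopic.Quotient.mk γ) := by
    intro x' y' hx hy h
    subst hx hy
    exact h
  exact gen _ _ h1

/-- Flat local data define holonomy. The `u i` are trivialisations over the open sets `U i`, whose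
ratios are locally constant on overlaps; they glue to a covering space with fibre `G`, and the
monodromy of that covering is the multiplicative function `h` (contravariant in the order of
concatenation, which matches the multiplication of `FundamentalGroup`). -/
theorem exists_holonomy {X : Type*} [TopologicalSpace X] {ι : Type*} {G : Type*} [Group G]
    (U : ι → Set X) (hU : ∀ i, IsOpen (U i)) (hcov : ∀ x, ∃ i, x ∈ U i) (u : ι → X → G)
    (hu : ∀ i j, ∀ x ∈ U i ∩ U j,
      ∀ᶠ y in 𝓝 x, u j y * (u i y)⁻¹ = u j x * (u i x)⁻¹) :
    ∃ h : ∀ {x y : X}, Path.Homotopic.Quotient x y → G,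
      (∀ {x y z : X} (p : Path.Homotopic.Quotient x y) (q : Path.Homotopic.Quotient y z),
        h (p.trans q) = h q * h p) ∧
      ∀ (i : ι) {x y : X} (γ : Path x y), (∀ t, γ t ∈ U i) →
        h (Path.Homotopic.Quotient.mk γ) = (u i y)⁻¹ * u i x := by
  let _ : TopologicalSpace G := ⊥
  have : DiscreteTopology G := ⟨rfl⟩
  choose idx hidx using hcov
  let Z : FiberBundleCore ι X G :=
    { baseSet := U
      isOpen_baseSet := hU
      indexAt := idx
      mem_baseSet_at := hidx
      coordChange := fun i j x g => u j x * (u i x)⁻¹ * g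
      coordChange_self := by intro i x _ g; simp
      continuousOn_coordChange := by
        intro i j
        rintro ⟨x, g⟩ ⟨hx, -⟩
        apply ContinuousAt.continuousWithinAt
        have h1 := hu i j x hx
        have h2 : ∀ᶠ p : X × G in 𝓝 (x, g),
            u j p.1 * (u i p.1)⁻¹ * p.2 = u j x * (u i x)⁻¹ * p.2 := by
          rw [nhds_prod_eq]
          filter_upwards [h1.prod_inl _] with p hp
          rw [hp]
        have h3 : ContinuousAt (fun p : X × G => u j x * (u i x)⁻¹ * p.2) (x, g) :=
          (continuous_of_discreteTopology
            (f := fun g : G => u j x * (u i x)⁻¹ * g)).continuousAt.comp continuousAt_snd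
        exact h3.congr (h2.mono fun p hp => hp.symm)
      coordChange_comp := by intro i j k x _ g; group }
  have cov : IsCoveringMap Z.proj := FiberBundle.isCoveringMap (F := G) (E := Z.Fiber)
  let pt : ∀ (x : X) (g : G), Z.proj ⁻¹' {x} := fun x g => ⟨⟨x, u (idx x) x * g⟩, rfl⟩
  have hinj : ∀ x g g', pt x g = pt x g' → g = g' := by
    intro x g g' h
    have h1 := congrArg Subtype.val h
    have h2 : (u (idx x) x * g : G) = u (idx x) x * g' := by
      have := (Bundle.TotalSpace.mk.injEq (F := G) (E := Z.Fiber) x (u (idx x) x * g) x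
        (u (idx x) x * g')).mp h1
      exact eq_of_heq this.2
    exact mul_left_cancel h2
  have small : ∀ (i : ι) {x y : X} (γ : Path x y), (∀ t, γ t ∈ U i) → ∀ g,
      cov.monodromy (Path.Homotopic.Quotient.mk γ) (pt x g) = pt y ((u i y)⁻¹ * u i x * g) := by
    intro i x y γ hγ g
    -- the lift which is constant in the `i`-th chart
    let Γ : I → Bundle.TotalSpace G Z.Fiber := fun t =>
      ⟨γ t, Z.coordChange i (idx (γ t)) (γ t) (u i x * g)⟩
    have hΓ : Continuous Γ := by
      have : Γ = fun t => (Z.localTriv i).toOpenPartialHomeomorph.symm (γ t, u i x * g) := by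
        rfl
      rw [this, ← continuousOn_univ]
      refine (Z.localTriv i).toOpenPartialHomeomorph.continuousOn_symm.comp (by fun_prop) ?_
      intro t _
      rw [(Z.localTriv i).target_eq]
      exact ⟨hγ t, trivial⟩
    have h0 : Γ 0 = (pt x g).1 := by
      change (⟨γ 0, u (idx (γ 0)) (γ 0) * (u i (γ 0))⁻¹ * (u i x * g)⟩ :
        Bundle.TotalSpace G Z.Fiber) = ⟨x, u (idx x) x * g⟩
      rw [γ.source]
      congr 1
      have : ∀ a b c : G, a * b⁻¹ * (b * c) = a * c := by intro a b c; group
      exact this _ _ _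
    have h1 : Γ 1 = (pt y ((u i y)⁻¹ * u i x * g)).1 := by
      change (⟨γ 1, u (idx (γ 1)) (γ 1) * (u i (γ 1))⁻¹ * (u i x * g)⟩ :
        Bundle.TotalSpace G Z.Fiber) = ⟨y, u (idx y) y * ((u i y)⁻¹ * u i x * g)⟩
      rw [γ.target]
      congr 1
      have : ∀ a b c d : G, a * b⁻¹ * (c * d) = a * (b⁻¹ * c * d) := by intro a b c d; group
      exact this _ _ _ _
    have hl := (cov.eq_liftPath_iff (γ := (γ : C(I, X))) (e := (pt x g).1) (Γ := Γ)
      (by simp; rfl)).2 ⟨hΓ, by funext t; rfl, h0⟩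
    apply Subtype.ext
    rw [← h1, hl]
    rfl
  have lin : ∀ {x y : X} (p : Path.Homotopic.Quotient x y), ∃ k : G, ∀ g,
      cov.monodromy p (pt x g) = pt y (k * g) := by
    intro x y p
    refine path_cover_induction hU (fun x => ⟨idx x, hidx x⟩)
      (Q := fun {x y} p => ∃ k : G, ∀ g, cov.monodromy p (pt x g) = pt y (k * g)) ?_ ?_ p
    · intro i x y γ hγ
      exact ⟨_, small i γ hγ⟩
    · rintro x y z p q ⟨k, hk⟩ ⟨l, hl⟩
      refine ⟨l * k, fun g => ?_⟩
      rw [cov.monodromy_trans_apply, hk, hl, mul_assoc]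
  choose h hh using @lin
  refine ⟨fun {x y} p => h p, ?_, ?_⟩
  · intro x y z p q
    have := hh (p.trans q) 1
    rw [cov.monodromy_trans_apply, hh, hh] at this
    simpa using (hinj _ _ _ this).symm
  · intro i x y γ hγ
    have := hh (Path.Homotopic.Quotient.mk γ) 1
    rw [small i γ hγ] at this
    simpa using (hinj _ _ _ this).symm

/-! ### A two-set van Kampen criterion for freeness -/

/-- A thin subset: paths inside it with the same endpoints are homotopic in the ambient space. -/
def ThinIn {X : Type*} [TopologicalSpace X] (S : Set X) : Prop :=
  ∀ ⦃x y : X⦄ (γ δ : Path x y), (∀ t, γ t ∈ S) → (∀ t, δ t ∈ S) → γ.Homotopic δ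

/-- Over a thin set one can choose, compatibly with paths inside the set, a class of paths from
the base point to each point of the set. -/
theorem ThinIn.exists_flat {X : Type*} [TopologicalSpace X] {S : Set X} (hS : ThinIn S) (x : X) :
    ∃ s : ∀ y, y ∈ S → Joined x y → Path.Homotopic.Quotient x y,
      ∀ {y z : X} (γ : Path y z) (_ : ∀ t, γ t ∈ S) (hy : y ∈ S) (hz : z ∈ S)
        (jy : Joined x y) (jz : Joined x z),
        s z hz jz = (s y hy jy).trans (Path.Homotopic.Quotient.mk γ) := by
  -- a representative of each path component of `S`
  let r : ∀ y, y ∈ S → S := fun y hy => Quotient.out (Quotient.mk (pathSetoid S) ⟨y, hy⟩)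
  have hr : ∀ y (hy : y ∈ S), JoinedIn S (r y hy) y := by
    intro y hy
    have h1 : Joined (r y hy) (⟨y, hy⟩ : S) := Quotient.mk_out (s := pathSetoid S) ⟨y, hy⟩
    exact (joinedIn_iff_joined (r y hy).2 hy).2 h1
  have hj : ∀ y (hy : y ∈ S), Joined x y → Joined x (r y hy) :=
    fun y hy h => h.trans (hr y hy).joined.symm
  let s : ∀ y, y ∈ S → Joined x y → Path.Homotopic.Quotient x y := fun y hy jy =>
    (Path.Homotopic.Quotient.mk (hj y hy jy).somePath).trans
      (Path.Homotopic.Quotient.mk (hr y hy).somePath)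
  refine ⟨s, ?_⟩
  intro y z γ hγ hy hz jy jz
  have hyz : r z hz = r y hy := by
    have : Quotient.mk (pathSetoid S) ⟨z, hz⟩ = Quotient.mk (pathSetoid S) ⟨y, hy⟩ := by
      apply Quotient.sound
      exact (joinedIn_iff_joined hz hy).1 ⟨γ.symm, fun t => hγ _⟩
    simp only [r, this]
  have gen : ∀ (a b : S) (hab : b = a) (p : Path x (a : X)) (p' : Path x (b : X))
      (q : Path (a : X) y) (q' : Path (b : X) z)
      (_ : ∀ t, q t ∈ S) (_ : ∀ t, q' t ∈ S) (_ : HEq p p'),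
      (Path.Homotopic.Quotient.mk p').trans (Path.Homotopic.Quotient.mk q') =
      ((Path.Homotopic.Quotient.mk p).trans (Path.Homotopic.Quotient.mk q)).trans
        (Path.Homotopic.Quotient.mk γ) := by
    intro a b hab p p' q q' hq hq' hp
    subst hab
    obtain rfl := eq_of_heq hp
    rw [Path.Homotopic.Quotient.trans_assoc, ← Path.Homotopic.Quotient.mk_trans q γ]
    congr 1
    refine Path.Homotopic.Quotient.eq.2 (hS _ _ hq' ?_)
    intro t
    have : (q.trans γ) t ∈ Set.range (q.trans γ) := ⟨t, rfl⟩
    rw [Path.trans_range] at this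
    rcases this with ⟨t', ht'⟩ | ⟨t', ht'⟩
    · rw [← ht']; exact hq t'
    · rw [← ht']; exact hγ t'
  refine gen (r y hy) (r z hz) hyz _ _ _ _ (hr y hy).somePath_mem (hr z hz).somePath_mem ?_
  have : ∀ (a b : S) (_ : b = a) (h : Joined x (a : X)) (h' : Joined x (b : X)),
      HEq h.somePath h'.somePath := by
    rintro a b rfl h h'
    rfl
  exact this _ _ hyz _ _

/-- If a locally path connected space is the union of two thin open sets, then its fundamental
group is free: it is a retract of the free group on the path components of the intersection. -/
theorem free_of_thin_cover {X : Type} [TopologicalSpace X] [LocallyPathConnectedSpace X]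
    {A B : Set X} (hAo : IsOpen A) (hBo : IsOpen B) (hAB : ∀ x, x ∈ A ∨ x ∈ B)
    (hA : ThinIn A) (hB : ThinIn B) (x : X) : IsFreeGroupType (FundamentalGroup X x) := by
  let J : Type := Quotient (pathSetoid (A ∩ B : Set X))
  let e : X → FreeGroup J := fun y =>
    if h : y ∈ A ∩ B then FreeGroup.of (Quotient.mk _ ⟨y, h⟩) else 1
  have he : ∀ y ∈ A ∩ B, ∀ z, JoinedIn (A ∩ B) y z → e y = e z := by
    intro y hy z hz
    have hz' : z ∈ A ∩ B := hz.target_mem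
    simp only [e, dif_pos hy, dif_pos hz']
    congr 1
    exact Quotient.sound ((joinedIn_iff_joined hy hz').1 hz)
  have hloc : ∀ y ∈ A ∩ B, ∀ᶠ z in 𝓝 y, e z = e y := by
    intro y hy
    have : pathComponentIn (A ∩ B) y ∈ 𝓝 y :=
      ((hAo.inter hBo).pathComponentIn y).mem_nhds (mem_pathComponentIn_self hy)
    filter_upwards [this] with z hz
    exact (he y hy z hz).symm
  obtain ⟨h, hmul, hsm⟩ := exists_holonomy (fun b : Bool => if b then A else B)
    (by intro b; cases b <;> simp [hAo, hBo])
    (by intro y; rcases hAB y with h | h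
        · exact ⟨true, by simpa⟩
        · exact ⟨false, by simpa⟩)
    (fun b : Bool => if b then e else fun _ => 1) (by
      intro i j y hy
      cases i <;> cases j
      · simp
      · filter_upwards [hloc y (by simpa [and_comm] using hy)] with z hz
        simp [hz]
      · filter_upwards [hloc y (by simpa using hy)] with z hz
        simp [hz]
      · simp)
  have hsA : ∀ {y z : X} (γ : Path y z), (∀ t, γ t ∈ A) →
      h (Path.Homotopic.Quotient.mk γ) = (e z)⁻¹ * e y := by
    intro y z γ hγ
    simpa using hsm true γ (by simpa using hγ)
  have hsB : ∀ {y z : X} (γ : Path y z), (∀ t, γ t ∈ B) →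
      h (Path.Homotopic.Quotient.mk γ) = 1 := by
    intro y z γ hγ
    simpa using hsm false γ (by simpa using hγ)
  obtain ⟨sA, hsA'⟩ := hA.exists_flat x
  obtain ⟨sB, hsB'⟩ := hB.exists_flat x
  let s : ∀ y, Joined x y → Path.Homotopic.Quotient x y := fun y jy =>
    if hb : y ∈ B then sB y hb jy else sA y ((hAB y).resolve_right hb) jy
  -- the discrepancy of the two gauges, as an element of the fundamental group
  let c : X → FundamentalGroup X x := fun y =>
    if hy : y ∈ A ∧ Joined x y then (sA y hy.1 hy.2).trans (s y hy.2).symm else 1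
  have hc : ∀ y (ya : y ∈ A) (jy : Joined x y),
      Path.Homotopic.Quotient.trans (c y) (s y jy) = sA y ya jy := by
    intro y ya jy
    simp only [c, dif_pos (And.intro ya jy)]
    rw [Path.Homotopic.Quotient.trans_assoc, Path.Homotopic.Quotient.symm_trans,
      Path.Homotopic.Quotient.trans_refl]
  have hcAB : ∀ y ∈ A ∩ B, ∀ z, JoinedIn (A ∩ B) y z → c y = c z := by
    rintro y ⟨ya, yb⟩ z ⟨γ, hγ⟩
    have za : z ∈ A := by simpa using (hγ 1).1
    have zb : z ∈ B := by simpa using (hγ 1).2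
    by_cases jy : Joined x y
    · have jz : Joined x z := jy.trans ⟨γ⟩
      simp only [c, dif_pos (And.intro ya jy), dif_pos (And.intro za jz), s, dif_pos yb, dif_pos zb]
      rw [hsA' γ (fun t => (hγ t).1) ya za jy jz, hsB' γ (fun t => (hγ t).2) yb zb jy jz]
      generalize sA y ya jy = a
      generalize sB y yb jy = b
      generalize Path.Homotopic.Quotient.mk γ = g
      have h1 : (b.trans g).symm = g.symm.trans b.symm := by
        obtain ⟨b, rfl⟩ := Path.Homotopic.Quotient.mk_surjective b
        obtain ⟨g, rfl⟩ := Path.Homotopic.Quotient.mk_surjective g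
        rw [← Path.Homotopic.Quotient.mk_trans, ← Path.Homotopic.Quotient.mk_symm, Path.trans_symm]
        rfl
      rw [h1, Path.Homotopic.Quotient.trans_assoc, ← Path.Homotopic.Quotient.trans_assoc g,
        Path.Homotopic.Quotient.trans_symm, Path.Homotopic.Quotient.refl_trans]
    · have jz : ¬ Joined x z := fun jz => jy (jz.trans ⟨γ.symm⟩)
      simp [c, jy, jz]
  let Ψ : FreeGroup J →* FundamentalGroup X x :=
    FreeGroup.lift fun j => (c (Quotient.out j : (A ∩ B : Set X)))⁻¹
  have hΨ : ∀ y, y ∈ A → Joined x y → Ψ (e y) = (c y)⁻¹ := by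
    intro y ya jy
    by_cases yb : y ∈ B
    · simp only [e, dif_pos (show y ∈ A ∩ B from ⟨ya, yb⟩), Ψ, FreeGroup.lift_apply_of]
      congr 1
      refine hcAB _ (Subtype.property _) _ ?_
      refine (joinedIn_iff_joined (Subtype.property _) (show y ∈ A ∩ B from ⟨ya, yb⟩)).2 ?_
      exact Quotient.mk_out (s := pathSetoid (A ∩ B : Set X))
        (⟨y, ⟨ya, yb⟩⟩ : (A ∩ B : Set X))
    · have h1 : e y = 1 := dif_neg fun h => yb h.2
      have h2 : c y = 1 := by
        simp only [c, dif_pos (And.intro ya jy), s, dif_neg yb]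
        exact Path.Homotopic.Quotient.trans_symm _
      rw [h1, h2]
      exact (map_one Ψ).trans inv_one.symm
  have main : ∀ {y z : X} (p : Path.Homotopic.Quotient y z) (jy : Joined x y) (jz : Joined x z),
      Path.Homotopic.Quotient.trans (Ψ (h p)) (s z jz) = (s y jy).trans p := by
    intro y z p
    refine path_cover_induction (U := fun b : Bool => if b then A else B)
      (by intro b; cases b <;> simp [hAo, hBo])
      (by intro y; rcases hAB y with h | h
          · exact ⟨true, by simpa⟩
          · exact ⟨false, by simpa⟩)
      (Q := fun {y z} p => ∀ (jy : Joined x y) (jz : Joined x z),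
        Path.Homotopic.Quotient.trans (Ψ (h p)) (s z jz) = (s y jy).trans p) ?_ ?_ p
    · intro b y z γ hγ jy jz
      cases b
      · have hγ' : ∀ t, γ t ∈ B := by simpa using hγ
        have yb : y ∈ B := by simpa using hγ' 0
        have zb : z ∈ B := by simpa using hγ' 1
        rw [hsB γ hγ', map_one]
        simp only [s, dif_pos yb, dif_pos zb]
        rw [hsB' γ hγ' yb zb jy jz]
        exact Path.Homotopic.Quotient.refl_trans _
      · have hγ' : ∀ t, γ t ∈ A := by simpa using hγ
        have ya : y ∈ A := by simpa using hγ' 0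
        have za : z ∈ A := by simpa using hγ' 1
        rw [hsA γ hγ', map_mul, map_inv, hΨ y ya jy, hΨ z za jz, inv_inv]
        have h1 := hsA' γ hγ' ya za jy jz
        rw [← hc z za jz, ← hc y ya jy] at h1
        have h2 : (c z * (c y)⁻¹ : FundamentalGroup X x) =
          Path.Homotopic.Quotient.trans (Path.Homotopic.Quotient.symm (c y)) (c z) := rfl
        rw [h2, Path.Homotopic.Quotient.trans_assoc, h1, ← Path.Homotopic.Quotient.trans_assoc,
          ← Path.Homotopic.Quotient.trans_assoc, Path.Homotopic.Quotient.symm_trans,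
          Path.Homotopic.Quotient.refl_trans]
    · intro y z w p q hp hq jy jw
      have jz : Joined x z := by
        obtain ⟨γ, rfl⟩ := Path.Homotopic.Quotient.mk_surjective p
        exact jy.trans ⟨γ⟩
      rw [hmul, map_mul]
      have h2 : (Ψ (h q) * Ψ (h p) : FundamentalGroup X x) =
          Path.Homotopic.Quotient.trans (Ψ (h p)) (Ψ (h q)) := rfl
      rw [h2, Path.Homotopic.Quotient.trans_assoc, hq jz jw, ← Path.Homotopic.Quotient.trans_assoc,
        hp jy jz, Path.Homotopic.Quotient.trans_assoc]
  let Φ : FundamentalGroup X x →* FreeGroup J :=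
    MonoidHom.mk' (fun p => h (x := x) (y := x) p) (fun p q => hmul (x := x) (y := x) (z := x) q p)
  have hΦ : Function.Injective Φ := by
    rw [injective_iff_map_eq_one]
    intro p hp
    have h1 := main (y := x) (z := x) p (Joined.refl x) (Joined.refl x)
    have h2 : h (x := x) (y := x) p = 1 := hp
    rw [h2, map_one] at h1
    have h3 : (s x (Joined.refl x)) = (s x (Joined.refl x)).trans p :=
      (Path.Homotopic.Quotient.refl_trans _).symm.trans h1
    have h4 := congrArg (fun q => Path.Homotopic.Quotient.trans (s x (Joined.refl x)).symm q) h3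
    simp only [← Path.Homotopic.Quotient.trans_assoc, Path.Homotopic.Quotient.symm_trans,
      Path.Homotopic.Quotient.refl_trans] at h4
    exact h4.symm
  have hfree : IsFreeGroup Φ.range := inferInstance
  exact ⟨IsFreeGroup.Generators Φ.range,
    ⟨(MonoidHom.ofInjective hΦ).trans (IsFreeGroup.toFreeGroup Φ.range)⟩⟩

/-! ### Configuration spaces and the realization -/

section Conf
variable {X : Type} [TopologicalSpace X] {n : ℕ}

/-- The quotient map from ordered to unordered configurations. -/
def proj (n : ℕ) (X : Type) [TopologicalSpace X] : Conf n X → UConf n X := Quot.mk _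

/-- The permutation action on ordered configurations. -/
def permuted (ρ : Equiv.Perm (Fin n)) (f : Conf n X) : Conf n X :=
  ⟨f.1 ∘ ρ, f.2.comp ρ.injective⟩

theorem continuous_permuted (ρ : Equiv.Perm (Fin n)) :
    Continuous (permuted ρ : Conf n X → Conf n X) := by
  unfold permuted
  refine Continuous.subtype_mk ?_ _
  refine continuous_pi fun i => ?_
  exact (continuous_apply (ρ i)).comp continuous_subtype_val

theorem proj_eq_iff {f g : Conf n X} : proj n X f = proj n X g ↔ ∃ ρ, f = permuted ρ g := by
  have heq : Equivalence (permRel n X) := by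
    refine ⟨fun f => ⟨1, rfl⟩, ?_, ?_⟩
    · rintro f g ⟨ρ, h⟩
      refine ⟨ρ⁻¹, ?_⟩
      rw [h]
      funext i
      simp
    · rintro f g k ⟨ρ, h⟩ ⟨τ, h'⟩
      exact ⟨ρ.trans τ, by rw [h, h']; rfl⟩
  unfold proj
  rw [Quot.eq, heq.eqvGen_iff]
  constructor
  · rintro ⟨ρ, h⟩
    exact ⟨ρ, Subtype.ext h⟩
  · rintro ⟨ρ, h⟩
    exact ⟨ρ, congrArg Subtype.val h⟩

theorem proj_permuted (ρ : Equiv.Perm (Fin n)) (f : Conf n X) :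
    proj n X (permuted ρ f) = proj n X f := proj_eq_iff.2 ⟨ρ, rfl⟩

theorem proj_eq_iff_range {f g : Conf n X} :
    proj n X f = proj n X g ↔ Set.range f.1 = Set.range g.1 := by
  rw [proj_eq_iff]
  constructor
  · rintro ⟨ρ, rfl⟩
    exact ρ.surjective.range_comp _
  · intro h
    refine ⟨(Equiv.ofInjective f.1 f.2).trans
      ((Equiv.setCongr h).trans (Equiv.ofInjective g.1 g.2).symm), Subtype.ext ?_⟩
    funext i
    have := Equiv.apply_ofInjective_symm g.2
      (Equiv.setCongr h (Equiv.ofInjective f.1 f.2 i))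
    simpa [permuted] using this.symm

theorem isOpenQuotientMap_proj : IsOpenQuotientMap (proj n X) := by
  refine ⟨Quot.mk_surjective, continuous_quot_mk, ?_⟩
  intro U hU
  have : proj n X ⁻¹' (proj n X '' U) = ⋃ ρ, permuted ρ ⁻¹' U := by
    ext f
    simp only [Set.mem_preimage, Set.mem_image, Set.mem_iUnion]
    constructor
    · rintro ⟨g, hg, h⟩
      obtain ⟨ρ, rfl⟩ := proj_eq_iff.1 h
      exact ⟨ρ, hg⟩
    · rintro ⟨ρ, h⟩
      exact ⟨_, h, proj_permuted ρ f⟩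
  rw [← (isQuotientMap_quot_mk (r := permRel n X)).isOpen_preimage]
  change IsOpen (proj n X ⁻¹' (proj n X '' U))
  rw [this]
  exact isOpen_iUnion fun ρ => hU.preimage (continuous_permuted ρ)

theorem continuous_proj : Continuous (proj n X) := isOpenQuotientMap_proj.continuous

/-- The underlying set of points of an unordered configuration. -/
def pts (C : UConf n X) : Set X :=
  Quot.lift (fun f : Conf n X => Set.range f.1)
    (fun _ _ h => proj_eq_iff_range.1 (Quot.sound h)) C

@[simp] theorem pts_proj (f : Conf n X) : pts (proj n X f) = Set.range f.1 := rfl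

theorem isOpen_conf [T2Space X] : IsOpen {f : Fin n → X | Function.Injective f} := by
  have : {f : Fin n → X | Function.Injective f} =
      ⋂ i, ⋂ j, ⋂ (_ : i ≠ j), {f : Fin n → X | f i ≠ f j} := by
    ext f
    simp only [Set.mem_ofPred_eq, Set.mem_iInter, Function.Injective]
    exact ⟨fun h i j hij h' => hij (h h'), fun h i j h' => by_contra fun hij => h i j hij h'⟩
  rw [this]
  refine isOpen_iInter_of_finite fun i => isOpen_iInter_of_finite fun j =>
    isOpen_iInter_of_finite fun _ => ?_
  exact (isClosed_eq (continuous_apply i) (continuous_apply j)).isOpen_compl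

end Conf

section Realization
variable {V : Type} [DecidableEq V] {Γ : SimpleGraph V}

/-- The point at parameter `t` of the segment from `e_u` to `e_v`. -/
def edgePt (u v : V) (t : ℝ) : V → ℝ := (1 - t) • basisVec u + t • basisVec v

theorem edgePt_apply (u v : V) (t : ℝ) (w : V) :
    edgePt u v t w = (1 - t) * (if w = u then 1 else 0) + t * (if w = v then 1 else 0) := by
  simp [edgePt, basisVec]

theorem mem_realization {p : V → ℝ} :
    p ∈ realization Γ ↔ ∃ u v, Γ.Adj u v ∧ ∃ t : ℝ, 0 ≤ t ∧ t ≤ 1 ∧ p = edgePt u v t := by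
  simp only [realization, Set.mem_iUnion, segment_eq_image, Set.mem_image, Set.mem_Icc]
  constructor
  · rintro ⟨u, v, h, t, ⟨h0, h1⟩, rfl⟩
    exact ⟨u, v, h, t, h0, h1, rfl⟩
  · rintro ⟨u, v, h, t, h0, h1, rfl⟩
    exact ⟨u, v, h, t, ⟨h0, h1⟩, rfl⟩

@[simp] theorem edgePt_zero (u v : V) : edgePt u v 0 = basisVec u := by simp [edgePt]
@[simp] theorem edgePt_one (u v : V) : edgePt u v 1 = basisVec v := by simp [edgePt]
theorem edgePt_symm (u v : V) (t : ℝ) : edgePt v u (1 - t) = edgePt u v t := by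
  simp [edgePt, add_comm]

theorem edgePt_left {u v : V} (h : u ≠ v) (t : ℝ) : edgePt u v t u = 1 - t := by
  simp [edgePt_apply, h]
theorem edgePt_right {u v : V} (h : u ≠ v) (t : ℝ) : edgePt u v t v = t := by
  simp [edgePt_apply, h.symm]
theorem edgePt_other {u v w : V} (h : w ≠ u) (h' : w ≠ v) (t : ℝ) : edgePt u v t w = 0 := by
  simp [edgePt_apply, h, h']

theorem continuous_edgePt (u v : V) : Continuous (edgePt u v) := by
  unfold edgePt; fun_prop

theorem realization_nonneg {p : V → ℝ} (hp : p ∈ realization Γ) (w : V) : 0 ≤ p w := by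
  obtain ⟨u, v, h, t, h0, h1, rfl⟩ := mem_realization.1 hp
  rw [edgePt_apply]
  have : 0 ≤ 1 - t := by linarith
  positivity

theorem realization_le_one {p : V → ℝ} (hp : p ∈ realization Γ) (w : V) : p w ≤ 1 := by
  obtain ⟨u, v, h, t, h0, h1, rfl⟩ := mem_realization.1 hp
  rw [edgePt_apply]
  split_ifs with h2 h3 h3
  · exact absurd (h2.symm.trans h3) h.ne
  all_goals linarith

theorem realization_eq_basisVec {p : V → ℝ} (hp : p ∈ realization Γ) {w : V} (h : p w = 1) :
    p = basisVec w := by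
  obtain ⟨u, v, huv, t, h0, h1, rfl⟩ := mem_realization.1 hp
  by_cases h2 : w = u
  · subst h2
    rw [edgePt_left huv.ne] at h
    have : t = 0 := by linarith
    subst this
    simp
  · by_cases h3 : w = v
    · subst h3
      rw [edgePt_right huv.ne] at h
      subst h
      simp
    · rw [edgePt_other h2 h3] at h
      exact absurd h zero_ne_one

theorem basisVec_mem (hΓ : Γ.Connected) (he : Γ.edgeSet.Nonempty) (v : V) :
    basisVec v ∈ realization Γ := by
  obtain ⟨e, he⟩ := he
  induction e using Sym2.ind with
  | _ a b =>
  have hab : Γ.Adj a b := he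
  have : ∃ w, Γ.Adj v w := by
    by_cases h : v = a
    · exact ⟨b, h ▸ hab⟩
    · obtain ⟨p⟩ := hΓ.preconnected v a
      cases p with
      | nil => exact absurd rfl h
      | cons h' _ => exact ⟨_, h'⟩
  obtain ⟨w, hw⟩ := this
  exact mem_realization.2 ⟨v, w, hw, 0, le_rfl, zero_le_one, (edgePt_zero _ _).symm⟩

instance locallyPathConnected_realization [Finite V] : LocallyPathConnectedSpace (realization Γ) := by
  have : LocallyPathConnectedSpace I := (convex_Icc (0:ℝ) 1).locallyPathConnectedSpace
  let F : (Σ _ : {e : V × V // Γ.Adj e.1 e.2}, I) → realization Γ := fun x =>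
    ⟨edgePt x.1.1.1 x.1.1.2 x.2, mem_realization.2
      ⟨x.1.1.1, x.1.1.2, x.1.2, x.2, x.2.2.1, x.2.2.2, rfl⟩⟩
  have hF : Continuous F := by
    refine continuous_sigma fun e => Continuous.subtype_mk ?_ _
    exact (continuous_edgePt e.1.1 e.1.2).comp continuous_subtype_val
  have hs : Function.Surjective F := by
    rintro ⟨p, hp⟩
    obtain ⟨u, v, h, t, h0, h1, rfl⟩ := mem_realization.1 hp
    exact ⟨⟨⟨(u, v), h⟩, ⟨t, h0, h1⟩⟩, rfl⟩
  exact (hF.isClosedMap.isQuotientMap hF hs).locallyPathConnectedSpace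

instance locallyPathConnected_uconf [Finite V] (n : ℕ) : LocallyPathConnectedSpace (UConf n (realization Γ)) := by
  have : LocallyPathConnectedSpace (Conf n (realization Γ)) :=
    (isOpen_conf (n := n) (X := realization Γ)).locallyPathConnectedSpace
  infer_instance

end Realization

/-! ### A criterion for the freeness of the braid group -/

/-- A space in which any two paths with the same endpoints are homotopic. -/
def PathThin (Y : Type*) [TopologicalSpace Y] : Prop :=
  ∀ ⦃x y : Y⦄ (γ δ : Path x y), γ.Homotopic δ

theorem PathThin.of_homotopy {Y Z : Type} [TopologicalSpace Y] [TopologicalSpace Z]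
    (hZ : PathThin Z) (r : C(Y, Z)) (i : C(Z, Y))
    (H : ContinuousMap.Homotopy (ContinuousMap.id Y) (i.comp r)) : PathThin Y := by
  intro x y γ γ'
  have h1 : (γ.map (map_continuous (i.comp r))).Homotopic (γ'.map (map_continuous (i.comp r))) := by
    obtain ⟨h⟩ := hZ (γ.map (map_continuous r)) (γ'.map (map_continuous r))
    exact ⟨h.map i⟩
  -- the tracks of the endpoints, with their endpoints in reduced form
  let px : Path x (i.comp r x) := H.evalAt x
  let py : Path y (i.comp r y) := H.evalAt y
  have e : ∀ δ : Path x y, (Path.Homotopic.Quotient.mk δ).trans (Path.Homotopic.Quotient.mk py) =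
      (Path.Homotopic.Quotient.mk px).trans
        (Path.Homotopic.Quotient.mk (δ.map (map_continuous (i.comp r)))) := by
    intro δ
    rw [← Path.Homotopic.Quotient.mk_trans, ← Path.Homotopic.Quotient.mk_trans]
    exact Path.Homotopic.Quotient.eq.2 (Path.Homotopic.map_trans_evalAt H δ)
  have e2 : (Path.Homotopic.Quotient.mk γ).trans (Path.Homotopic.Quotient.mk py) =
      (Path.Homotopic.Quotient.mk γ').trans (Path.Homotopic.Quotient.mk py) := by
    rw [e γ, e γ', Path.Homotopic.Quotient.eq.2 h1]
  have e3 := congrArg (fun q => Path.Homotopic.Quotient.trans q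
    (Path.Homotopic.Quotient.mk py).symm) e2
  simp only [Path.Homotopic.Quotient.trans_assoc, Path.Homotopic.Quotient.trans_symm,
    Path.Homotopic.Quotient.trans_refl] at e3
  exact Path.Homotopic.Quotient.eq.1 e3

theorem PathThin.thinIn_range {Y X : Type} [TopologicalSpace Y] [TopologicalSpace X]
    (hY : PathThin Y) {j : Y → X} (hj : IsEmbedding j) : ThinIn (Set.range j) := by
  intro x y γ γ' h h'
  obtain ⟨a, rfl⟩ : x ∈ Set.range j := by simpa using h 0
  obtain ⟨b, rfl⟩ : y ∈ Set.range j := by simpa using h 1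
  have lift : ∀ δ : Path (j a) (j b), (∀ t, δ t ∈ Set.range j) →
      ∃ δ' : Path a b, δ = δ'.map hj.continuous := by
    intro δ hδ
    choose d hd using hδ
    refine ⟨⟨⟨d, ?_⟩, ?_, ?_⟩, ?_⟩
    · rw [hj.continuous_iff]
      exact δ.continuous.congr fun t => (hd t).symm
    · exact hj.injective (by simp [hd])
    · exact hj.injective (by simp [hd])
    · ext t
      exact (hd t).symm
  obtain ⟨δ, rfl⟩ := lift γ h
  obtain ⟨δ', rfl⟩ := lift γ' h'
  obtain ⟨K⟩ := hY δ δ'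
  exact ⟨K.map ⟨j, hj.continuous⟩⟩

section Chart
variable {X : Type} [TopologicalSpace X]

/-- Tuples of points different from `v` which are increasing for the coordinate `f`. -/
def sortedTuples (v : X) (f : X → ℝ) (m : ℕ) : Set (Fin m → X) :=
  {q | (∀ i, q i ≠ v) ∧ StrictMono fun i => f (q i)}

/-- When `f` is a homeomorphism from the complement of `v` onto a subset of the line, straight line
homotopies are available on increasing tuples. -/
theorem pathThin_sortedTuples {v : X} {f : X → ℝ} {g : ℝ → X} (hf : ContinuousOn f {v}ᶜ)
    (hg : ContinuousOn g (f '' {v}ᶜ)) (hgf : ∀ x, x ≠ v → g (f x) = x) (m : ℕ) :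
    PathThin (sortedTuples v f m) := by
  intro q q' a b
  have hcont : ∀ (c : Path q q') (i : Fin m), Continuous fun t => f ((c t).1 i) := by
    intro c i
    refine hf.comp_continuous ?_ fun t => (c t).2.1 i
    exact (continuous_apply i).comp (continuous_subtype_val.comp c.continuous)
  let L : I × I → Fin m → ℝ := fun p i =>
    (1 - (p.1 : ℝ)) * f ((a p.2).1 i) + p.1 * f ((b p.2).1 i)
  have hL : ∀ i, Continuous fun p => L p i := by
    intro i
    have h1 := (hcont a i).comp (continuous_snd : Continuous (Prod.snd : I × I → I))
    have h2 := (hcont b i).comp (continuous_snd : Continuous (Prod.snd : I × I → I))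
    have h3 : Continuous fun p : I × I => (p.1 : ℝ) := by fun_prop
    exact ((continuous_const.sub h3).mul h1).add (h3.mul h2)
  have hmem : ∀ p i, L p i ∈ f '' {v}ᶜ := by
    intro p i
    have hc : IsPreconnected (Set.range (fun t => f ((a t).1 i)) ∪
        Set.range (fun t => f ((b t).1 i))) := by
      refine IsPreconnected.union (f (q.1 i)) ⟨0, by simp⟩ ⟨0, by simp⟩ ?_ ?_
      · exact isPreconnected_range (hcont a i)
      · exact isPreconnected_range (hcont b i)
    have hsub : Set.range (fun t => f ((a t).1 i)) ∪ Set.range (fun t => f ((b t).1 i)) ⊆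
        f '' {v}ᶜ := by
      rintro _ (⟨t, rfl⟩ | ⟨t, rfl⟩)
      · exact ⟨_, (a t).2.1 i, rfl⟩
      · exact ⟨_, (b t).2.1 i, rfl⟩
    apply hsub
    have := (hc.ordConnected.convex (𝕜 := ℝ)).segment_subset (x := f ((a p.2).1 i))
      (y := f ((b p.2).1 i)) (Or.inl ⟨p.2, rfl⟩) (Or.inr ⟨p.2, rfl⟩)
    apply this
    exact ⟨1 - p.1, p.1, by linarith [p.1.2.2], p.1.2.1, by ring, by simp [L]⟩
  have hfg : ∀ y ∈ f '' {v}ᶜ, f (g y) = y ∧ g y ≠ v := by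
    rintro _ ⟨x, hx, rfl⟩
    rw [hgf x hx]
    exact ⟨rfl, hx⟩
  let F : I × I → sortedTuples v f m := fun p => ⟨fun i => g (L p i), fun i => (hfg _ (hmem p i)).2, by
    intro i j hij
    simp only [(hfg _ (hmem p _)).1]
    have h1 := (a p.2).2.2 hij
    have h2 := (b p.2).2.2 hij
    have h3 := p.1.2.1
    have h4 := p.1.2.2
    simp only [L]
    rcases h3.eq_or_lt with h | h
    · rw [← h]; simpa using h1
    · nlinarith⟩
  have hF : Continuous F := by
    refine Continuous.subtype_mk (continuous_pi fun i => ?_) _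
    exact hg.comp_continuous (hL i) fun p => hmem p i
  refine ⟨⟨⟨⟨F, hF⟩, ?_, ?_⟩, ?_⟩⟩
  · intro t
    apply Subtype.ext
    funext i
    simp [F, L, hgf _ ((a t).2.1 i)]
  · intro t
    apply Subtype.ext
    funext i
    simp [F, L, hgf _ ((b t).2.1 i)]
  · rintro s t ht
    apply Subtype.ext
    funext i
    have hab : a t = b t := by
      rcases ht with rfl | rfl <;> simp
    have : L (s, t) i = f ((a t).1 i) := by
      simp only [L, ← hab]; ring
    simp [F, this, hgf _ ((a t).2.1 i)]

theorem sortedTuples_eq {v : X} {f : X → ℝ} (hinj : Set.InjOn f {v}ᶜ) {m : ℕ} {q q' : Fin m → X}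
    (hq : q ∈ sortedTuples v f m) (hq' : q' ∈ sortedTuples v f m)
    (h : Set.range q = Set.range q') : q = q' := by
  have h1 : Set.range (fun i => f (q i)) = Set.range (fun i => f (q' i)) := by
    have := congrArg (fun S => f '' S) h
    rw [← Set.range_comp, ← Set.range_comp] at this
    exact this
  have h2 := (hq.2.range_inj hq'.2).1 h1
  funext i
  exact hinj (hq.1 i) (hq'.1 i) (congrFun h2 i)

theorem isOpen_sortedTuples [T1Space X] {v : X} {f : X → ℝ} (hf : ContinuousOn f {v}ᶜ) (m : ℕ) :
    IsOpen (sortedTuples v f m) := by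
  have h1 : ∀ i, IsOpen {q : Fin m → X | q i ≠ v} := fun i =>
    isOpen_compl_singleton.preimage (continuous_apply i)
  rw [isOpen_iff_mem_nhds]
  rintro q ⟨hq, hm⟩
  have h2 : ∀ i, ContinuousAt (fun q : Fin m → X => f (q i)) q := fun i =>
    ContinuousAt.comp (f := fun q : Fin m → X => q i)
      (hf.continuousAt (isOpen_compl_singleton.mem_nhds (hq i))) (continuous_apply i).continuousAt
  have h3 : ∀ᶠ q' in 𝓝 q, ∀ i, q' i ≠ v :=
    Filter.eventually_all.2 fun i => (h1 i).mem_nhds (hq i)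
  have h4 : ∀ᶠ q' in 𝓝 q, ∀ i j, i < j → f (q' i) < f (q' j) := by
    refine Filter.eventually_all.2 fun i => Filter.eventually_all.2 fun j => ?_
    by_cases hij : i < j
    · filter_upwards [(h2 i).eventually_lt (h2 j) (hm hij)] with q' hq' _ using hq'
    · exact Filter.Eventually.of_forall fun _ h => absurd h hij
  filter_upwards [h3, h4] with q' h5 h6
  exact ⟨h5, fun i j hij => h6 i j hij⟩

/-- An open family of ordered configurations, no two of which are permutations of each other,
embeds as an open set in the unordered configuration space. -/
theorem thin_image {n : ℕ} [T2Space X] {E : Set (Fin n → X)} (hE : IsOpen E)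
    (hinj : ∀ x ∈ E, Function.Injective x)
    (hun : ∀ x ∈ E, ∀ y ∈ E, Set.range x = Set.range y → x = y) (hth : PathThin E) :
    IsOpen {C : UConf n X | ∃ x ∈ E, pts C = Set.range x} ∧
      ThinIn {C : UConf n X | ∃ x ∈ E, pts C = Set.range x} := by
  let k : E → Conf n X := fun x => ⟨x.1, hinj _ x.2⟩
  have hk : IsOpenEmbedding k := by
    have : IsOpenEmbedding (fun x : E => (k x).1) := hE.isOpenEmbedding_subtypeVal
    exact IsOpenEmbedding.of_comp k
      (isOpen_conf (n := n) (X := X)).isOpenEmbedding_subtypeVal this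
  have hj : IsOpenEmbedding (proj n X ∘ k) := by
    refine .of_continuous_injective_isOpenMap (continuous_proj.comp hk.continuous) ?_
      (isOpenQuotientMap_proj.isOpenMap.comp hk.isOpenMap)
    intro x y hxy
    exact Subtype.ext (hun _ x.2 _ y.2 (proj_eq_iff_range.1 hxy))
  have hr : {C : UConf n X | ∃ x ∈ E, pts C = Set.range x} = Set.range (proj n X ∘ k) := by
    ext C
    obtain ⟨c, rfl⟩ := isOpenQuotientMap_proj.surjective C
    constructor
    · rintro ⟨x, hx, h⟩
      exact ⟨⟨x, hx⟩, proj_eq_iff_range.2 h.symm⟩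
    · rintro ⟨x, hx⟩
      exact ⟨x.1, x.2, by rw [← hx]; rfl⟩
  rw [hr]
  exact ⟨hj.isOpen_range, hth.thinIn_range hj.isEmbedding⟩

/-- Tuples whose first point is strictly closest to `v` and whose other points are increasing. -/
def pointedTuples (ρ f : X → ℝ) (m : ℕ) : Set (Fin (m + 1) → X) :=
  {x | (∀ i : Fin m, ρ (x 0) < ρ (x i.succ)) ∧ StrictMono fun i : Fin m => f (x i.succ)}

/-- If `X` minus a point `v` is homeomorphic to a subset of the line and `v` has a contractible
neighbourhood `{ρ < 1}`, then braid groups of `X` are free. The two thin open sets are: the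
configurations avoiding `v`, and the configurations with a unique point closest to `v`. -/
theorem free_of_chart [T2Space X] (v : X) (f : X → ℝ) (g : ℝ → X) (ρ : X → ℝ)
    (hf : ContinuousOn f {v}ᶜ) (hg : ContinuousOn g (f '' {v}ᶜ)) (hgf : ∀ x, x ≠ v → g (f x) = x)
    (hρ : Continuous ρ) (hρv : ∀ x, ρ x = 0 ↔ x = v) (hρ0 : ∀ x, 0 ≤ ρ x) (hρ1 : ∀ x, ρ x ≤ 1)
    (c : I × {x : X // ρ x < 1} → X) (hc : Continuous c) (hc0 : ∀ x, c (0, x) = x)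
    (hc1 : ∀ x, c (1, x) = v) (hcρ : ∀ p, ρ (c p) ≤ ρ p.2)
    (m : ℕ) [LocallyPathConnectedSpace (UConf (m + 2) X)] (x : UConf (m + 2) X) :
    IsFreeGroupType (FundamentalGroup (UConf (m + 2) X) x) := by
  have hfi : Set.InjOn f {v}ᶜ := fun a ha b hb h => by
    rw [← hgf a ha, h, hgf b hb]
  have hpt : ∀ x ∈ pointedTuples ρ f (m + 1), Fin.tail x ∈ sortedTuples v f (m + 1) := by
    rintro x ⟨h1, h2⟩
    refine ⟨fun i hi => ?_, h2⟩
    have := h1 i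
    have h3 : ρ (x i.succ) = 0 := (hρv _).2 hi
    rw [h3] at this
    exact absurd this (not_lt.2 (hρ0 _))
  have hpinj : ∀ x ∈ pointedTuples ρ f (m + 1), Function.Injective x := by
    rintro x ⟨h1, h2⟩
    rw [← Fin.cons_self_tail x, Fin.cons_injective_iff]
    refine ⟨?_, ?_⟩
    · rintro ⟨i, hi⟩
      have := h1 i
      simp only [Fin.tail] at hi
      rw [hi] at this
      exact lt_irrefl _ this
    · exact Function.Injective.of_comp (f := f) h2.injective
  have hpth : PathThin (pointedTuples ρ f (m + 1)) := by
    have hlt : ∀ x : pointedTuples ρ f (m + 1), ρ (x.1 0) < 1 := fun x =>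
      (x.2.1 0).trans_le (hρ1 _)
    refine (pathThin_sortedTuples hf hg hgf (m + 1)).of_homotopy
      ⟨fun x => ⟨Fin.tail x.1, hpt _ x.2⟩, ?_⟩ ⟨fun q => ⟨Fin.cons v q.1, ?_, ?_⟩, ?_⟩
      ⟨⟨fun p => ⟨Fin.cons (c (p.1, ⟨p.2.1 0, hlt p.2⟩)) (Fin.tail p.2.1), ?_, ?_⟩, ?_⟩, ?_, ?_⟩
    · refine Continuous.subtype_mk (continuous_pi fun i => ?_) _
      exact (continuous_apply i.succ).comp continuous_subtype_val
    · intro i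
      simp only [Fin.cons_zero, Fin.cons_succ]
      rw [(hρv v).2 rfl]
      exact lt_of_le_of_ne (hρ0 _) fun h => q.2.1 i ((hρv _).1 h.symm)
    · simpa using q.2.2
    · refine Continuous.subtype_mk (continuous_pi fun i => ?_) _
      refine Fin.cases ?_ (fun i => ?_) i
      · simpa using continuous_const
      · simp only [Fin.cons_succ]
        exact (continuous_apply i).comp continuous_subtype_val
    · intro i
      simp only [Fin.cons_zero, Fin.cons_succ]
      exact (hcρ _).trans_lt (p.2.2.1 i)
    · simpa [Fin.tail] using p.2.2.2
    · refine Continuous.subtype_mk (continuous_pi fun i => ?_) _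
      have h0 : ∀ i, Continuous fun p : I × pointedTuples ρ f (m + 1) => p.2.1 i := fun i =>
        (continuous_apply i).comp (continuous_subtype_val.comp continuous_snd)
      refine Fin.cases ?_ (fun i => ?_) i
      · simp only [Fin.cons_zero]
        exact hc.comp (continuous_fst.prodMk ((h0 0).subtype_mk _))
      · simpa [Fin.tail] using h0 i.succ
    · intro x
      apply Subtype.ext
      simp [hc0]
    · intro x
      apply Subtype.ext
      simp [hc1]
  have hpo : IsOpen (pointedTuples ρ f (m + 1)) := by
    have : pointedTuples ρ f (m + 1) = {x | ∀ i : Fin (m + 1), ρ (x 0) < ρ (x i.succ)} ∩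
        Fin.tail ⁻¹' (sortedTuples v f (m + 1)) := by
      ext x
      constructor
      · intro hx
        exact ⟨hx.1, hpt x hx⟩
      · rintro ⟨h1, h2⟩
        exact ⟨h1, h2.2⟩
    rw [this]
    refine IsOpen.inter ?_ ((isOpen_sortedTuples hf _).preimage ?_)
    · simp only [Set.ofPred_forall]
      refine isOpen_iInter_of_finite fun i => ?_
      exact isOpen_lt (hρ.comp (continuous_apply _)) (hρ.comp (continuous_apply _))
    · exact continuous_pi fun i => continuous_apply _
  have hpun : ∀ x ∈ pointedTuples ρ f (m + 1), ∀ y ∈ pointedTuples ρ f (m + 1),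
      Set.range x = Set.range y → x = y := by
    have hmin : ∀ x ∈ pointedTuples ρ f (m + 1), ∀ z ∈ Set.range x, z = x 0 ∨ ρ (x 0) < ρ z := by
      rintro x hx _ ⟨i, rfl⟩
      refine Fin.cases (Or.inl rfl) (fun i => Or.inr (hx.1 i)) i
    have hdis : ∀ x ∈ pointedTuples ρ f (m + 1), Set.range (Fin.tail x) = Set.range x \ {x 0} := by
      intro x hx
      ext z
      constructor
      · rintro ⟨i, rfl⟩
        refine ⟨⟨i.succ, rfl⟩, fun h => ?_⟩
        exact Fin.succ_ne_zero i (hpinj x hx h)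
      · rintro ⟨⟨i, rfl⟩, h⟩
        obtain ⟨j, rfl⟩ := Fin.exists_succ_eq.2 (fun h' : i = 0 => h (by rw [h']; rfl))
        exact ⟨j, rfl⟩
    intro x hx y hy h
    have h0 : x 0 = y 0 := by
      rcases hmin x hx (y 0) (h ▸ ⟨0, rfl⟩) with h1 | h1
      · exact h1.symm
      · rcases hmin y hy (x 0) (h ▸ ⟨0, rfl⟩) with h2 | h2
        · exact h2
        · exact absurd h1 (not_lt.2 h2.le)
    have h1 : Fin.tail x = Fin.tail y := by
      refine sortedTuples_eq hfi (hpt x hx) (hpt y hy) ?_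
      rw [hdis x hx, hdis y hy, h, h0]
    rw [← Fin.cons_self_tail x, ← Fin.cons_self_tail y, h0, h1]
  obtain ⟨hAo, hAt⟩ := thin_image hpo hpinj hpun hpth
  obtain ⟨hBo, hBt⟩ := thin_image (isOpen_sortedTuples hf (m + 2))
    (fun x hx => Function.Injective.of_comp (f := f) hx.2.injective)
    (fun x hx y hy => sortedTuples_eq hfi hx hy) (pathThin_sortedTuples hf hg hgf (m + 2))
  -- sorting an injective tuple of points different from `v`
  have sort : ∀ (k : ℕ) (q : Fin k → X), Function.Injective q → (∀ i, q i ≠ v) →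
      ∃ τ : Equiv.Perm (Fin k), q ∘ τ ∈ sortedTuples v f k := by
    intro k q hq hv
    refine ⟨Tuple.sort (fun i => f (q i)), fun i => hv _, ?_⟩
    refine (Tuple.monotone_sort (fun i => f (q i))).strictMono_of_injective ?_
    intro i j hij
    exact (Tuple.sort _).injective (hq (hfi (hv _) (hv _) hij))
  refine free_of_thin_cover hAo hBo ?_ hAt hBt x
  intro C
  obtain ⟨y, rfl⟩ := isOpenQuotientMap_proj.surjective C
  simp only [Set.mem_ofPred_eq, pts_proj]
  by_cases h : ∃ i, y.1 i = v
  · left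
    obtain ⟨i, hi⟩ := h
    let y' : Fin (m + 2) → X := y.1 ∘ Equiv.swap 0 i
    have hy' : Function.Injective y' := y.2.comp (Equiv.injective _)
    have h0 : y' 0 = v := by simp [y', hi]
    have hne : ∀ i, Fin.tail y' i ≠ v := by
      intro j hj
      exact Fin.succ_ne_zero j (hy' (hj.trans h0.symm))
    obtain ⟨τ, hτ⟩ := sort (m + 1) (Fin.tail y')
      (hy'.comp (Fin.succ_injective _)) hne
    refine ⟨Fin.cons v (Fin.tail y' ∘ τ), ⟨?_, ?_⟩, ?_⟩
    · intro j
      simp only [Fin.cons_zero, Fin.cons_succ]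
      rw [(hρv v).2 rfl]
      exact lt_of_le_of_ne (hρ0 _) fun h => hne _ ((hρv _).1 h.symm)
    · simpa using hτ.2
    · rw [Fin.range_cons, Set.range_comp, τ.surjective.range_eq, Set.image_univ, ← Fin.range_cons,
        ← h0, Fin.cons_self_tail]
      exact ((Equiv.swap 0 i).surjective.range_comp y.1).symm
  · right
    push Not at h
    obtain ⟨τ, hτ⟩ := sort _ y.1 y.2 h
    exact ⟨_, hτ, (τ.surjective.range_comp y.1).symm⟩

end Chart

/-! ### Graphs with at most one essential vertex -/

section Labelling
variable {V : Type} [Fintype V] {Γ : SimpleGraph V}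

theorem three_neighbours {a b c w : V} (h : (Γ.neighborSet w).ncard ≤ 2) (ha : Γ.Adj w a)
    (hb : Γ.Adj w b) (hc : Γ.Adj w c) (hab : a ≠ b) (hac : a ≠ c) (hbc : b ≠ c) : False := by
  have h1 : ({a, b, c} : Set V).ncard = 3 := Set.ncard_eq_three.2 ⟨a, b, c, hab, hac, hbc, rfl⟩
  have h2 : ({a, b, c} : Set V) ⊆ Γ.neighborSet w := by
    rintro x (rfl | rfl | rfl) <;> assumption
  have := Set.ncard_le_ncard h2 (Set.toFinite _)
  omega

/-- If all vertices but `v` have degree at most two, then `Γ` minus `v` is a disjoint union of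
paths; numbering these one after the other, with gaps, gives an injective integer labelling `φ`
for which adjacent vertices have consecutive labels and each neighbour of `v` is next to an unused
label `ψ`. -/
theorem exists_labelling (hΓ : Γ.Connected) (v : V)
    (hdeg : ∀ w, w ≠ v → (Γ.neighborSet w).ncard ≤ 2) :
    ∃ φ ψ : V → ℤ, (∀ a b, a ≠ v → b ≠ v → φ a = φ b → a = b) ∧
      (∀ a b, a ≠ v → b ≠ v → Γ.Adj a b → |φ a - φ b| = 1) ∧
      (∀ w, Γ.Adj v w → |ψ w - φ w| = 1 ∧ ∀ u, u ≠ v → φ u ≠ ψ w) := by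
  let H : SimpleGraph V :=
    { Adj := fun a b => Γ.Adj a b ∧ a ≠ v ∧ b ≠ v
      symm := ⟨fun a b h => ⟨h.1.symm, h.2.2, h.2.1⟩⟩
      loopless := ⟨fun a h => h.1.ne rfl⟩ }
  have hroot : ∀ u, u ≠ v → ∃ w, Γ.Adj v w ∧ H.Reachable w u := by
    intro u hu
    obtain ⟨p⟩ := hΓ.preconnected u v
    have : ∀ (a b : V) (_ : Γ.Walk a b), b = v → a ≠ v → ∃ w, Γ.Adj v w ∧ H.Reachable w a := by
      intro a b p hb
      induction p with
      | nil => intro h; exact absurd hb h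
      | @cons a c b hac _ ih =>
        intro ha
        by_cases hc : c = v
        · exact ⟨a, hc ▸ hac.symm, SimpleGraph.Reachable.refl _⟩
        · obtain ⟨w, hw, hr⟩ := ih hb hc
          exact ⟨w, hw, hr.trans (SimpleGraph.Adj.reachable (G := H) ⟨hac.symm, hc, ha⟩)⟩
    exact this u v p rfl hu
  have hroot' : ∀ C : H.ConnectedComponent, ∃ w, ∀ u, u ≠ v → H.connectedComponentMk u = C →
      Γ.Adj v w ∧ H.Reachable w u := by
    intro C
    by_cases h : ∃ u, u ≠ v ∧ H.connectedComponentMk u = C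
    · obtain ⟨u, hu, rfl⟩ := h
      obtain ⟨w, hw, hr⟩ := hroot u hu
      refine ⟨w, fun u' hu' h => ⟨hw, hr.trans ?_⟩⟩
      exact (SimpleGraph.ConnectedComponent.eq.1 h).symm
    · exact ⟨v, fun u hu h' => absurd ⟨u, hu, h'⟩ h⟩
  choose root hrt using hroot'
  let r : V → V := fun u => root (H.connectedComponentMk u)
  have hr : ∀ u, u ≠ v → Γ.Adj v (r u) ∧ H.Reachable (r u) u := fun u hu => hrt _ u hu rfl
  let d : V → ℕ := fun u => H.dist (r u) u
  have hr_adj : ∀ a b, H.Adj a b → r a = r b := by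
    intro a b hab
    simp only [r, SimpleGraph.ConnectedComponent.eq.2 hab.reachable]
  -- every vertex other than the root has a predecessor
  have hpred : ∀ u k, u ≠ v → d u = k + 1 → ∃ w, H.Adj w u ∧ r w = r u ∧ d w = k := by
    intro u k hu hd
    obtain ⟨w, hwd⟩ := (hr u hu).2.exists_walk_length_eq_dist
    have hlen : w.length = k + 1 := hwd.trans hd
    obtain ⟨b, hbu, q, hq⟩ : ∃ b, ∃ _ : H.Adj b u, ∃ q : H.Walk (r u) b, q.length = k := by
      obtain ⟨w', hw'⟩ : ∃ w' : H.Walk u (r u), w'.length = k + 1 :=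
        ⟨w.reverse, by rw [SimpleGraph.Walk.length_reverse, hlen]⟩
      clear hwd hlen w hd
      revert hw'
      generalize r u = z at w'
      intro hw'
      cases w' with
      | nil => simp at hw'
      | @cons _ b _ hub q =>
        refine ⟨b, hub.symm, q.reverse, ?_⟩
        rw [SimpleGraph.Walk.length_reverse]
        simpa using hw'
    refine ⟨b, hbu, hr_adj _ _ hbu, ?_⟩
    have e : r b = r u := hr_adj _ _ hbu
    have h1 : d b ≤ k := by
      simp only [d, e]
      exact hq ▸ SimpleGraph.dist_le q
    have h2 : d u ≤ d b + 1 := by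
      have hrb := (hr b hbu.2.1).2
      rw [e] at hrb
      obtain ⟨w2, hw2⟩ := hrb.exists_walk_length_eq_dist
      have := SimpleGraph.dist_le (w2.concat hbu)
      rw [SimpleGraph.Walk.length_concat, hw2] at this
      simp only [d, e]
      exact this
    omega
  have hd0 : ∀ u, u ≠ v → d u = 0 → u = r u := by
    intro u hu h
    exact ((hr u hu).2.dist_eq_zero_iff.1 h).symm
  have hlevel : ∀ k a b, a ≠ v → b ≠ v → r a = r b → d a = k → d b = k → a = b := by
    intro k
    induction k with
    | zero =>
      intro a b ha hb hab h1 h2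
      rw [hd0 a ha h1, hd0 b hb h2, hab]
    | succ k ih =>
      intro a b ha hb hab h1 h2
      by_contra hne
      obtain ⟨x, hx, hxr, hxd⟩ := hpred a k ha h1
      obtain ⟨y, hy, hyr, hyd⟩ := hpred b k hb h2
      obtain rfl := ih x y hx.2.1 hy.2.1 (by rw [hxr, hyr, hab]) hxd hyd
      rcases k with _ | k
      · have hxx := hd0 x hx.2.1 hxd
        have : Γ.Adj x v := by rw [hxx]; exact (hr x hx.2.1).1.symm
        exact three_neighbours (hdeg x hx.2.1) hx.1 hy.1 this hne ha hb
      · obtain ⟨z, hz, hzr, hzd⟩ := hpred x k hx.2.1 hxd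
        refine three_neighbours (hdeg x hx.2.1) hx.1 hy.1 hz.1.symm hne ?_ ?_
        · rintro rfl; omega
        · rintro rfl; omega
  obtain ⟨N, hN⟩ : ∃ N : ℕ, ∀ u, d u + 2 ≤ N :=
    ⟨Finset.univ.sup (fun u => d u) + 2, fun u =>
      Nat.add_le_add_right (Finset.le_sup (f := fun u => d u) (Finset.mem_univ u)) 2⟩
  let idx : V → ℤ := fun u => ((Finite.equivFin H.ConnectedComponent (H.connectedComponentMk u) : ℕ) : ℤ)
  have hidx : ∀ a b, idx a = idx b → r a = r b := by
    intro a b h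
    simp only [idx, Nat.cast_inj] at h
    have := (Finite.equivFin H.ConnectedComponent).injective (Fin.ext h)
    simp only [r, this]
  have hidx' : ∀ a b, H.Adj a b → idx a = idx b := by
    intro a b hab
    simp only [idx, SimpleGraph.ConnectedComponent.eq.2 hab.reachable]
  let φ : V → ℤ := fun u => idx u * N + d u
  -- division with remainder recovers the component and the distance
  have hdiv : ∀ (i j k l : ℤ), -1 ≤ k → k ≤ N - 2 → 0 ≤ l → l ≤ N - 1 →
      i * N + k = j * N + l → (i = j ∧ k = l) ∨ k = -1 := by
    intro i j k l h1 h2 h3 h4 h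
    by_cases hk : k = -1
    · exact Or.inr hk
    · left
      have hij : i = j := by
        have hk0 : 0 ≤ k := by omega
        rcases lt_trichotomy i j with h5 | h5 | h5
        · nlinarith
        · exact h5
        · nlinarith
      subst hij
      exact ⟨rfl, by linarith⟩
  have hdN : ∀ u, (d u : ℤ) ≤ N - 2 := fun u => by have := hN u; omega
  have hφ : ∀ a b, a ≠ v → b ≠ v → φ a = φ b → a = b := by
    intro a b ha hb h
    rcases hdiv (idx a) (idx b) (d a) (d b) (by omega) (hdN a) (by omega)
      (by have := hdN b; omega) h with ⟨h1, h2⟩ | h1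
    · exact hlevel (d a) a b ha hb (hidx _ _ h1) rfl (by omega)
    · omega
  let ψ : V → ℤ := fun w => if w = r w then φ w - 1 else φ w + 1
  refine ⟨φ, ψ, hφ, ?_, ?_⟩
  · intro a b ha hb hab
    have hab' : H.Adj a b := ⟨hab, ha, hb⟩
    have hd : ∀ a b, H.Adj a b → d b ≤ d a + 1 := by
      intro a b hab
      have e := hr_adj a b hab
      obtain ⟨w2, hw2⟩ := (hr a hab.2.1).2.exists_walk_length_eq_dist
      have := SimpleGraph.dist_le (w2.concat hab)
      rw [SimpleGraph.Walk.length_concat, hw2] at this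
      simp only [d, ← e]
      exact this
    have h1 := hd a b hab'
    have h2 := hd b a hab'.symm
    have h3 : d a ≠ d b := fun h =>
      hab.ne (hlevel (d a) a b ha hb (hr_adj _ _ hab') rfl h.symm)
    have h4 : φ a - φ b = d a - d b := by
      simp only [φ, hidx' a b hab']; ring
    rw [h4]
    rcases (by omega : d a = d b + 1 ∨ d b = d a + 1) with h | h <;> rw [h] <;> push_cast <;> simp
  · intro w hw
    have hwv : w ≠ v := hw.ne'
    by_cases h : w = r w
    · have hψ : ψ w = φ w - 1 := if_pos h
      refine ⟨by rw [hψ]; simp, fun u hu he => ?_⟩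
      have hdw : d w = 0 := by
        simp only [d]
        rw [← h]
        exact SimpleGraph.dist_self
      rw [hψ] at he
      have he' : idx u * N + (d u + 1 : ℤ) = idx w * N + 0 := by
        simp only [φ, hdw] at he
        push_cast at he
        linarith
      -- `d u + 1` is at most `N - 1`, hence not divisible by `N`
      have h5 := hN u
      rcases lt_trichotomy (idx u) (idx w) with h6 | h6 | h6
      · have : (idx u + 1) * (N : ℤ) ≤ idx w * N := by
          apply mul_le_mul_of_nonneg_right <;> omega
        have h7 := hN u
        nlinarith
      · rw [h6] at he'; omega
      · have : (idx w + 1) * (N : ℤ) ≤ idx u * N := by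
          apply mul_le_mul_of_nonneg_right <;> omega
        nlinarith
    · have hψ : ψ w = φ w + 1 := if_neg h
      refine ⟨by rw [hψ]; simp, fun u hu he => ?_⟩
      rw [hψ] at he
      have hdw : d w ≠ 0 := fun h0 => h (hd0 w hwv h0)
      obtain ⟨k, hk⟩ := Nat.exists_eq_succ_of_ne_zero hdw
      rcases hdiv (idx u) (idx w) (d u) (d w + 1) (by omega) (hdN u) (by omega)
        (by have := hdN w; omega) (by simp only [φ] at he; linarith) with ⟨h1, h2⟩ | h1
      · obtain ⟨x, hx, hxr, hxd⟩ := hpred u (d w) hu (by omega)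
        have hxw : x = w := hlevel (d w) x w hx.2.1 hwv (hxr.trans (hidx _ _ h1)) hxd rfl
        subst hxw
        obtain ⟨y, hy, hyr, hyd⟩ := hpred x k hwv hk
        refine three_neighbours (hdeg x hwv) hx.1 hy.1.symm hw.symm ?_ hu hy.2.1
        rintro rfl
        omega
      · omega

end Labelling

section Star
variable {V : Type} [DecidableEq V] {Γ : SimpleGraph V}

/-- A point of positive `v`-coordinate lies on an edge at `v`. -/
theorem star_form {p : V → ℝ} (hp : p ∈ realization Γ) {v : V} (hv : 0 < p v) :
    ∃ w, Γ.Adj v w ∧ ∃ t : ℝ, 0 ≤ t ∧ t < 1 ∧ p = edgePt v w t := by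
  obtain ⟨a, b, hab, t, h0, h1, rfl⟩ := mem_realization.1 hp
  by_cases ha : v = a
  · subst ha
    rw [edgePt_left hab.ne] at hv
    exact ⟨b, hab, t, h0, by linarith, rfl⟩
  · by_cases hb : v = b
    · subst hb
      rw [edgePt_right hab.ne] at hv
      exact ⟨a, hab.symm, 1 - t, by linarith, by linarith, (edgePt_symm _ _ _).symm⟩
    · rw [edgePt_other ha hb] at hv
      exact absurd hv (lt_irrefl _)

theorem edgePt_mem {u w : V} (h : Γ.Adj u w) {t : ℝ} (h0 : 0 ≤ t) (h1 : t ≤ 1) :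
    edgePt u w t ∈ realization Γ := mem_realization.2 ⟨u, w, h, t, h0, h1, rfl⟩

/-- The straight contraction of the open star of `v` to `v`. -/
theorem contract_mem {p : V → ℝ} (hp : p ∈ realization Γ) {v : V} (hv : 0 < p v) {s : ℝ}
    (h0 : 0 ≤ s) (h1 : s ≤ 1) : (1 - s) • p + s • basisVec v ∈ realization Γ := by
  obtain ⟨w, hw, t, ht0, ht1, rfl⟩ := star_form hp hv
  have : (1 - s) • edgePt v w t + s • basisVec v = edgePt v w ((1 - s) * t) := by
    unfold edgePt
    module
  rw [this]
  refine edgePt_mem hw (mul_nonneg (by linarith) ht0) ?_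
  nlinarith

end Star

section Free
variable {V : Type} [Fintype V] [DecidableEq V] {Γ : SimpleGraph V}

/-- Points other than `e_v` lie on an edge avoiding `v` or on an edge `{w, v}`, away from `v`. -/
theorem off_form {p : V → ℝ} (hp : p ∈ realization Γ) {v : V} (hv : p ≠ basisVec v) :
    (∃ a b, Γ.Adj a b ∧ a ≠ v ∧ b ≠ v ∧ ∃ t : ℝ, 0 ≤ t ∧ t ≤ 1 ∧ p = edgePt a b t) ∨
    (∃ w, Γ.Adj v w ∧ ∃ t : ℝ, 0 ≤ t ∧ t < 1 ∧ p = edgePt w v t) := by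
  obtain ⟨a, b, hab, t, h0, h1, rfl⟩ := mem_realization.1 hp
  by_cases ha : a = v
  · subst ha
    right
    refine ⟨b, hab, 1 - t, by linarith, ?_, (edgePt_symm _ _ _).symm⟩
    rcases h0.eq_or_lt with h | h
    · subst h; simp at hv
    · linarith
  · by_cases hb : b = v
    · subst hb
      right
      refine ⟨a, hab.symm, t, h0, ?_, rfl⟩
      refine lt_of_le_of_ne h1 ?_
      rintro rfl
      simp at hv
    · exact Or.inl ⟨a, b, hab, ha, hb, t, h0, h1, rfl⟩

theorem sum_edgePt {a b : V} (c : V → ℝ) (t : ℝ) :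
    ∑ w, edgePt a b t w * c w = (1 - t) * c a + t * c b := by
  simp [edgePt_apply, add_mul, Finset.sum_add_distrib]

/-- If all vertices but `v` have degree at most two, the braid groups are free: the labelling of the
vertices extends to an embedding of the complement of `v` into the line. -/
theorem free_of_degree (hΓ : Γ.Connected) (he : Γ.edgeSet.Nonempty) (v : V)
    (hdeg : ∀ w, w ≠ v → (Γ.neighborSet w).ncard ≤ 2) (m : ℕ)
    (x : UConf (m + 2) (realization Γ)) :
    IsFreeGroupType (FundamentalGroup (UConf (m + 2) (realization Γ)) x) := by
  obtain ⟨φ, ψ, hinj, hadj, hψ⟩ := exists_labelling hΓ v hdeg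
  let φ' : V → ℝ := fun w => if w = v then 0 else φ w
  let ψ' : V → ℝ := fun w => if w = v then 0 else ψ w
  let F : (V → ℝ) → ℝ := fun p => ∑ w, p w * φ' w + p v / (1 - p v) * ∑ w, p w * ψ' w
  let tent : V → ℝ → ℝ := fun w t => if w = v then 0 else max 0 (1 - |t - φ w|)
  let G : ℝ → V → ℝ := fun t w => if w = v then 1 - ∑ u, tent u t else tent w t
  have htent : ∀ w, Continuous (tent w) := by
    intro w
    by_cases h : w = v
    · simp only [tent, if_pos h]; fun_prop
    · simp only [tent, if_neg h]; fun_prop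
  have hG : Continuous G := by
    refine continuous_pi fun w => ?_
    by_cases h : w = v
    · simp only [G, if_pos h]
      exact continuous_const.sub (continuous_finsetSum _ fun u _ => htent u)
    · simp only [G, if_neg h]
      exact htent w
  -- the value of a tent function between two consecutive integers
  have tent_val : ∀ (k l : ℤ) (t : ℝ), |l - k| = 1 → 0 ≤ t → t ≤ 1 → ∀ w, w ≠ v →
      (φ w = k → tent w ((1 - t) * k + t * l) = 1 - t) ∧
      (φ w = l → tent w ((1 - t) * k + t * l) = t) ∧
      (φ w ≠ k → φ w ≠ l → tent w ((1 - t) * k + t * l) = 0) := by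
    intro k l t hkl h0 h1 w hw
    have hkl' : l = k + 1 ∨ l = k - 1 := by
      rcases abs_eq (zero_le_one' ℤ) |>.1 hkl with h | h
      · left; omega
      · right; omega
    simp only [tent, if_neg hw]
    refine ⟨?_, ?_, ?_⟩
    · intro h
      rw [h]
      rcases hkl' with rfl | rfl
      · rw [show (1 - t) * (k : ℝ) + t * ((k + 1 : ℤ) : ℝ) - k = t by push_cast; ring,
          abs_of_nonneg h0, max_eq_right (by linarith)]
      · rw [show (1 - t) * (k : ℝ) + t * ((k - 1 : ℤ) : ℝ) - k = -t by push_cast; ring,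
          abs_neg, abs_of_nonneg h0, max_eq_right (by linarith)]
    · intro h
      rw [h]
      rcases hkl' with rfl | rfl
      · rw [show (1 - t) * (k : ℝ) + t * ((k + 1 : ℤ) : ℝ) - (k + 1 : ℤ) = -(1 - t) by
          push_cast; ring, abs_neg, abs_of_nonneg (by linarith), max_eq_right (by linarith)]
        ring
      · rw [show (1 - t) * (k : ℝ) + t * ((k - 1 : ℤ) : ℝ) - (k - 1 : ℤ) = 1 - t by
          push_cast; ring, abs_of_nonneg (by linarith), max_eq_right (by linarith)]
        ring
    · intro hk hl
      apply max_eq_left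
      have far : ∀ y : ℝ, (∃ j : ℤ, (j : ℝ) ≤ y ∧ y ≤ j + 1 ∧ φ w ≠ j ∧ φ w ≠ j + 1) →
          1 - |y - φ w| ≤ 0 := by
        rintro y ⟨j, h2, h3, h4, h5⟩
        rcases lt_or_gt_of_ne h4 with h6 | h6
        · have : (φ w : ℝ) + 1 ≤ j := by exact_mod_cast h6
          rw [abs_of_nonneg (by linarith)]
          linarith
        · have h7 : j + 2 ≤ φ w := by omega
          have : (j : ℝ) + 2 ≤ φ w := by exact_mod_cast h7
          rw [abs_of_nonpos (by linarith)]
          linarith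
      apply far
      rcases hkl' with rfl | rfl
      · refine ⟨k, ?_, ?_, hk, hl⟩ <;> push_cast <;> nlinarith
      · refine ⟨k - 1, ?_, ?_, hl, by simpa using hk⟩ <;> push_cast <;> nlinarith
  have F_off : ∀ a b t, a ≠ v → b ≠ v → F (edgePt a b t) = (1 - t) * φ a + t * φ b := by
    intro a b t ha hb
    simp only [F, sum_edgePt, edgePt_other ha.symm hb.symm]
    simp [φ', ha, hb]
  have F_star : ∀ w t, w ≠ v → t < 1 → F (edgePt w v t) = (1 - t) * φ w + t * ψ w := by
    intro w t hw ht
    simp only [F, sum_edgePt, edgePt_right hw]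
    have : (1 - t) ≠ 0 := by linarith
    simp only [φ', ψ', if_neg hw, if_true]
    field_simp
    ring
  have hGF : ∀ p ∈ realization Γ, p ≠ basisVec v → G (F p) = p := by
    intro p hp hpv
    rcases off_form hp hpv with ⟨a, b, hab, ha, hb, t, h0, h1, rfl⟩ | ⟨w, hw, t, h0, h1, rfl⟩
    · rw [F_off a b t ha hb]
      have hkl : |φ b - φ a| = 1 := by rw [abs_sub_comm]; exact hadj a b ha hb hab
      have key : ∀ u, tent u ((1 - t) * φ a + t * φ b) = edgePt a b t u := by
        intro u
        by_cases hu : u = v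
        · rw [hu, edgePt_other ha.symm hb.symm]; simp [tent]
        · have h3 := tent_val (φ a) (φ b) t hkl h0 h1 u hu
          by_cases hua : u = a
          · rw [hua] at h3 ⊢
            rw [h3.1 rfl, edgePt_left hab.ne]
          · by_cases hub : u = b
            · rw [hub] at h3 ⊢
              rw [h3.2.1 rfl, edgePt_right hab.ne]
            · rw [edgePt_other hua hub]
              exact h3.2.2 (fun h => hua (hinj _ _ hu ha h)) (fun h => hub (hinj _ _ hu hb h))
      funext u
      by_cases hu : u = v
      · simp only [G, if_pos hu, key]
        have := sum_edgePt (a := a) (b := b) (fun _ => 1) t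
        simp only [mul_one] at this
        rw [this, hu, edgePt_other ha.symm hb.symm]
        ring
      · simp only [G, if_neg hu, key]
    · have hwv : w ≠ v := hw.ne'
      rw [F_star w t hwv h1]
      have key : ∀ u, u ≠ v → tent u ((1 - t) * φ w + t * ψ w) = edgePt w v t u := by
        intro u hu
        have h3 := tent_val (φ w) (ψ w) t (hψ w hw).1 h0 h1.le u hu
        by_cases huw : u = w
        · rw [huw] at h3 ⊢
          rw [h3.1 rfl, edgePt_left hwv]
        · rw [edgePt_other huw hu]
          exact h3.2.2 (fun h => huw (hinj _ _ hu hwv h)) ((hψ w hw).2 u hu)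
      funext u
      by_cases hu : u = v
      · simp only [G, if_pos hu]
        have h4 : ∑ u, tent u ((1 - t) * φ w + t * ψ w) = 1 - t := by
          rw [Finset.sum_eq_single w]
          · rw [key w hwv, edgePt_left hwv]
          · intro u _ huw
            by_cases hu : u = v
            · simp [tent, hu]
            · rw [key u hu, edgePt_other huw hu]
          · intro h; exact absurd (Finset.mem_univ w) h
        rw [h4, hu, edgePt_right hwv]
        ring
      · simp only [G, if_neg hu, key u hu]
  let X := realization Γ
  let e : X := ⟨basisVec v, basisVec_mem hΓ he v⟩
  have hne : ∀ p : X, p ≠ e ↔ p.1 ≠ basisVec v := fun p => by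
    rw [Ne, Subtype.ext_iff]
  have hv1 : basisVec v v = 1 := by simp [basisVec]
  let f : X → ℝ := fun p => F p.1
  let g : ℝ → X := fun t => if h : G t ∈ realization Γ then ⟨G t, h⟩ else e
  have hgf : ∀ p, p ≠ e → g (f p) = p := by
    intro p hp
    have h1 := hGF p.1 p.2 ((hne p).1 hp)
    have h2 : G (f p) ∈ realization Γ := by rw [h1]; exact p.2
    simp only [g, dif_pos h2]
    exact Subtype.ext h1
  have hcoord : ∀ w, Continuous fun p : X => p.1 w := fun w =>
    (continuous_apply w).comp continuous_subtype_val
  refine free_of_chart (X := X) e f g (fun p => 1 - p.1 v) ?_ ?_ hgf (continuous_const.sub (hcoord v))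
    ?_ ?_ ?_ (fun q => ⟨(1 - (q.1 : ℝ)) • q.2.1.1 + (q.1 : ℝ) • basisVec v,
      contract_mem q.2.1.2 (by linarith [q.2.2]) q.1.2.1 q.1.2.2⟩) ?_ ?_ ?_ ?_ m x
  · have h1 : ContinuousOn (fun p : X => p.1 v / (1 - p.1 v)) {e}ᶜ := by
      refine ContinuousOn.div (hcoord v).continuousOn (continuous_const.sub (hcoord v)).continuousOn ?_
      intro p hp h
      have h2 : p.1 v = 1 := by linarith
      exact (hne p).1 hp (realization_eq_basisVec p.2 h2)
    refine ContinuousOn.add ?_ (h1.mul ?_)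
    · exact (continuous_finsetSum _ fun w _ => (hcoord w).mul continuous_const).continuousOn
    · exact (continuous_finsetSum _ fun w _ => (hcoord w).mul continuous_const).continuousOn
  · rw [IsInducing.subtypeVal.continuousOn_iff]
    refine hG.continuousOn.congr ?_
    rintro _ ⟨p, hp, rfl⟩
    change (g (f p)).1 = G (f p)
    rw [hgf p hp]
    exact (hGF p.1 p.2 ((hne p).1 hp)).symm
  · intro p
    constructor
    · intro h
      exact Subtype.ext (realization_eq_basisVec p.2 (by linarith))
    · rintro rfl
      simp [e, hv1]
  · intro p
    linarith [realization_le_one p.2 v]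
  · intro p
    linarith [realization_nonneg p.2 v]
  · refine Continuous.subtype_mk ?_ _
    have h1 : Continuous fun q : I × {x : X // 1 - x.1 v < 1} => (q.1 : ℝ) := by fun_prop
    have h2 : Continuous fun q : I × {x : X // 1 - x.1 v < 1} => q.2.1.1 := by fun_prop
    exact ((continuous_const.sub h1).smul h2).add (h1.smul continuous_const)
  · intro p
    apply Subtype.ext
    simp
  · intro p
    apply Subtype.ext
    simp [e]
  · intro q
    have h1 := q.1.2.1
    have h2 := q.1.2.2
    have h3 := realization_le_one q.2.1.2 v
    simp only [Pi.add_apply, Pi.smul_apply, smul_eq_mul, hv1]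
    nlinarith

end Free

/-! ### Commuting elements of free groups -/

/-- A commutative free group has at most one generator. -/
theorem subsingleton_of_comm {T : Type*} (h : ∀ x y : FreeGroup T, x * y = y * x) :
    Subsingleton T := by
  refine ⟨fun a b => by_contra fun hab => ?_⟩
  let L : FreeGroup T →* Equiv.Perm (Fin 3) :=
    FreeGroup.lift fun t => if t = a then Equiv.swap 0 1 else Equiv.swap 1 2
  have h1 := congrArg L (h (FreeGroup.of a) (FreeGroup.of b))
  simp only [L, map_mul, FreeGroup.lift_apply_of, if_true, if_neg (Ne.symm hab)] at h1
  exact absurd h1 (by decide)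

/-- Commuting elements of a free group are powers of a common element. -/
theorem exists_common_root {G : Type*} [Group G] [IsFreeGroup G] {α β : G}
    (h : α * β = β * α) : ∃ (γ : G) (a b : ℤ), α = γ ^ a ∧ β = γ ^ b := by
  let K : Subgroup G := Subgroup.closure {α, β}
  have hcomm : ∀ x y : K, x * y = y * x := by
    have : ∀ x ∈ ({α, β} : Set G), ∀ y ∈ ({α, β} : Set G), x * y = y * x := by
      rintro x (rfl | rfl) y (rfl | rfl)
      · rfl
      · exact h
      · exact h.symm
      · rfl
    exact (Subgroup.isMulCommutative_closure this).is_comm.comm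
  let e : K ≃* FreeGroup (IsFreeGroup.Generators K) := IsFreeGroup.toFreeGroup K
  have hs : Subsingleton (IsFreeGroup.Generators K) := by
    apply subsingleton_of_comm
    intro x y
    apply e.symm.injective
    rw [map_mul, map_mul, hcomm]
  have hcyc : IsCyclic (FreeGroup (IsFreeGroup.Generators K)) := by
    rcases isEmpty_or_nonempty (IsFreeGroup.Generators K) with h' | ⟨⟨t⟩⟩
    · infer_instance
    · have : Unique (IsFreeGroup.Generators K) := ⟨⟨t⟩, fun _ => Subsingleton.elim _ _⟩
      infer_instance
  obtain ⟨g, hg⟩ := hcyc.exists_generator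
  have key : ∀ x ∈ K, ∃ k : ℤ, x = (e.symm g : G) ^ k := by
    intro x hx
    obtain ⟨k, hk⟩ := Subgroup.mem_zpowers_iff.1 (hg (e ⟨x, hx⟩))
    refine ⟨k, ?_⟩
    have h1 : (⟨x, hx⟩ : K) = (e.symm g) ^ k := by
      rw [← map_zpow, hk, MulEquiv.symm_apply_apply]
    exact congrArg Subtype.val h1
  obtain ⟨a, ha⟩ := key α (Subgroup.subset_closure (Or.inl rfl))
  obtain ⟨b, hb⟩ := key β (Subgroup.subset_closure (Or.inr rfl))
  exact ⟨_, a, b, ha, hb⟩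

/-- A free group cannot contain two commuting elements separated by homomorphisms to torsion-free
groups. -/
theorem not_free_of_commute {G A B : Type*} [Group G] [Group A] [Group B] [IsMulTorsionFree A]
    (Φ : G →* A) (Ψ : G →* B) {α β : G} (h : α * β = β * α) (h1 : Φ α ≠ 1) (h2 : Φ β = 1)
    (h3 : Ψ β ≠ 1) : ¬ IsFreeGroupType G := by
  rintro ⟨S, ⟨e⟩⟩
  have : IsFreeGroup G := IsFreeGroup.ofMulEquiv e.symm
  obtain ⟨γ, a, b, rfl, rfl⟩ := exists_common_root h
  rw [map_zpow] at h1 h2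
  have hb : b ≠ 0 := by
    rintro rfl
    simp at h3
  have h4 : Φ γ = 1 := (IsMulTorsionFree.zpow_eq_one_iff_left hb).1 h2
  rw [h4, one_zpow] at h1
  exact h1 rfl

/-- The commutator which occurs as the monodromy of two particles at a trivalent vertex. -/
theorem freeGroup_commutator_ne_one {T : Type*} {a b : T} (hab : a ≠ b) :
    (FreeGroup.of a * FreeGroup.of b * (FreeGroup.of a)⁻¹ * (FreeGroup.of b)⁻¹ : FreeGroup T) ≠ 1 := by
  intro h
  let L : FreeGroup T →* Equiv.Perm (Fin 3) :=
    FreeGroup.lift fun t => if t = a then Equiv.swap 0 1 else Equiv.swap 1 2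
  have h1 := congrArg L h
  simp only [L, map_mul, map_inv, map_one, FreeGroup.lift_apply_of, if_true,
    if_neg (Ne.symm hab)] at h1
  exact absurd h1 (by decide)

/-! ### Unordered configuration spaces of connected graphs are path connected -/

section Sets
variable {X : Type} [TopologicalSpace X] {n : ℕ}

/-- Two finite sets are joined when they underlie configurations in the same path component. -/
def SetsJoined (n : ℕ) (S T : Set X) : Prop :=
  ∃ f g : Conf n X, Set.range f.1 = S ∧ Set.range g.1 = T ∧ Joined (proj n X f) (proj n X g)

theorem SetsJoined.symm {S T : Set X} (h : SetsJoined n S T) : SetsJoined n T S := by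
  obtain ⟨f, g, hf, hg, j⟩ := h
  exact ⟨g, f, hg, hf, j.symm⟩

theorem SetsJoined.trans {S T U : Set X} (h : SetsJoined n S T) (h' : SetsJoined n T U) :
    SetsJoined n S U := by
  obtain ⟨f, g, hf, hg, j⟩ := h
  obtain ⟨f', g', hf', hg', j'⟩ := h'
  rw [proj_eq_iff_range.2 (hf'.trans hg.symm)] at j'
  exact ⟨f, g', hf, hg', j.trans j'⟩

theorem exists_conf {S : Set X} (hS : S.Finite) (hn : S.ncard = n) :
    ∃ f : Conf n X, Set.range f.1 = S := by
  have : Finite S := hS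
  let e : S ≃ Fin n := Finite.equivFinOfCardEq hn
  refine ⟨⟨fun i => e.symm i, Subtype.val_injective.comp e.symm.injective⟩, ?_⟩
  change Set.range (Subtype.val ∘ e.symm) = S
  rw [e.symm.surjective.range_comp, Subtype.range_val]

theorem SetsJoined.refl {S : Set X} (hS : S.Finite) (hn : S.ncard = n) : SetsJoined n S S := by
  obtain ⟨f, hf⟩ := exists_conf hS hn
  exact ⟨f, f, hf, hf, Joined.refl _⟩

/-- One particle can be moved from `a` to `b`, whatever the position of the others. -/
def CanMove (n : ℕ) (a b : X) : Prop :=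
  ∀ R : Set X, R.Finite → R.ncard + 1 = n → a ∉ R → b ∉ R → SetsJoined n (insert a R) (insert b R)

theorem CanMove.refl (a : X) : CanMove n a a := by
  intro R hR hn ha _
  exact SetsJoined.refl (hR.insert a) (by rw [Set.ncard_insert_of_notMem ha hR, hn])

theorem CanMove.symm {a b : X} (h : CanMove n a b) : CanMove n b a :=
  fun R hR hn hb ha => (h R hR hn ha hb).symm

/-- Exchanging roles: a particle at `a` passes an obstructing particle at `b` on its way to `c`
by letting the latter go first. -/
theorem pass_obstruction {a b c : X} {R : Set X} (hb : b ∈ R)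
    (h1 : SetsJoined n (insert b (insert a (R \ {b}))) (insert c (insert a (R \ {b}))))
    (h2 : SetsJoined n (insert a (insert c (R \ {b}))) (insert b (insert c (R \ {b})))) :
    SetsJoined n (insert a R) (insert c R) := by
  have e1 : insert b (insert a (R \ {b})) = insert a R := by
    rw [Set.insert_comm, Set.insert_sdiff_singleton, Set.insert_eq_of_mem hb]
  have e2 : insert b (insert c (R \ {b})) = insert c R := by
    rw [Set.insert_comm, Set.insert_sdiff_singleton, Set.insert_eq_of_mem hb]
  rw [e1] at h1
  rw [e2, Set.insert_comm] at h2
  exact h1.trans h2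

theorem ncard_exchange {a b : X} {R : Set X} (hR : R.Finite) (hb : b ∈ R) (ha : a ∉ R) :
    (insert a (R \ {b})).ncard = R.ncard := by
  rw [Set.ncard_insert_of_notMem (fun h => ha h.1) (hR.subset Set.sdiff_subset),
    Set.ncard_sdiff_singleton_add_one hb hR]

theorem CanMove.trans {a b c : X} (h : CanMove n a b) (h' : CanMove n b c) : CanMove n a c := by
  intro R hR hn ha hc
  by_cases hac : a = c
  · subst hac
    exact CanMove.refl a R hR hn ha hc
  by_cases hb : b ∈ R
  · have hab : a ≠ b := fun e => ha (e ▸ hb)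
    have hcb : c ≠ b := fun e => hc (e ▸ hb)
    have hfin : (R \ {b}).Finite := hR.subset Set.sdiff_subset
    refine pass_obstruction hb ?_ ?_
    · refine h' _ (hfin.insert _) (by rw [ncard_exchange hR hb ha, hn]) ?_ ?_
      · rintro (e | e)
        · exact hab e.symm
        · exact e.2 rfl
      · rintro (e | e)
        · exact hac e.symm
        · exact hc e.1
    · refine h _ (hfin.insert _) (by rw [ncard_exchange hR hb hc, hn]) ?_ ?_
      · rintro (e | e)
        · exact hac e
        · exact ha e.1
      · rintro (e | e)
        · exact hcb e.symm
        · exact e.2 rfl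
  · exact (h R hR hn ha hb).trans (h' R hR hn hb hc)

/-- If every single move is possible, then all configurations are joined. -/
theorem joined_of_canMove (h : ∀ a b : X, CanMove n a b) (C D : UConf n X) : Joined C D := by
  have key : ∀ (k : ℕ) (S T : Set X), S.Finite → T.Finite → S.ncard = n → T.ncard = n →
      (S \ T).ncard = k → SetsJoined n S T := by
    intro k
    induction k with
    | zero =>
      intro S T hS hT hSn hTn hk
      have h1 : S \ T = ∅ := (Set.ncard_eq_zero (hS.subset Set.sdiff_subset)).1 hk
      have h2 : S = T := Set.eq_of_subset_of_ncard_le (Set.sdiff_eq_empty.1 h1)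
        (by rw [hSn, hTn]) hT
      subst h2
      exact SetsJoined.refl hS hSn
    | succ k ih =>
      intro S T hS hT hSn hTn hk
      obtain ⟨a, ha⟩ : (S \ T).Nonempty := by
        rw [← Set.ncard_pos (hS.subset Set.sdiff_subset)]; omega
      obtain ⟨b, hb⟩ : (T \ S).Nonempty := by
        by_contra hne
        have h1 : T ⊆ S := Set.sdiff_eq_empty.1 (Set.not_nonempty_iff_eq_empty.1 hne)
        have h2 : T = S := Set.eq_of_subset_of_ncard_le h1 (by rw [hSn, hTn]) hS
        exact ha.2 (h2 ▸ ha.1)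
      have hfin : (S \ {a}).Finite := hS.subset Set.sdiff_subset
      have h1 : SetsJoined n S (insert b (S \ {a})) := by
        have := h a b (S \ {a}) hfin (by rw [Set.ncard_sdiff_singleton_add_one ha.1 hS, hSn])
          (fun h => h.2 rfl) (fun h => hb.2 h.1)
        rwa [Set.insert_sdiff_singleton, Set.insert_eq_of_mem ha.1] at this
      refine h1.trans (ih _ _ (hfin.insert b) hT ?_ hTn ?_)
      · rw [ncard_exchange hS ha.1 hb.2, hSn]
      · have : insert b (S \ {a}) \ T = (S \ T) \ {a} := by
          ext x
          simp only [Set.mem_sdiff, Set.mem_insert_iff, Set.mem_singleton_iff]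
          constructor
          · rintro ⟨rfl | h3, h4⟩
            · exact absurd hb.1 h4
            · exact ⟨⟨h3.1, h4⟩, h3.2⟩
          · rintro ⟨⟨h3, h4⟩, h5⟩
            exact ⟨Or.inr ⟨h3, h5⟩, h4⟩
        rw [this, Set.ncard_sdiff_singleton_of_mem ha, hk]
        rfl
  obtain ⟨f, rfl⟩ := isOpenQuotientMap_proj.surjective C
  obtain ⟨g, rfl⟩ := isOpenQuotientMap_proj.surjective D
  have hcard : ∀ f : Conf n X, (Set.range f.1).ncard = n := by
    intro f
    rw [← Set.image_univ, Set.ncard_image_of_injective _ f.2, Set.ncard_univ, Nat.card_fin]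
  obtain ⟨f', g', hf, hg, j⟩ := key _ (Set.range f.1) (Set.range g.1) (Set.finite_range _)
    (Set.finite_range _) (hcard f) (hcard g) rfl
  rwa [proj_eq_iff_range.2 hf, proj_eq_iff_range.2 hg] at j

/-- A particle can be moved along an arc. -/
theorem canMove_arc {p : ℝ → X} (hp : ContinuousOn p (Set.Icc 0 1))
    (hinj : Set.InjOn p (Set.Icc 0 1)) :
    ∀ s ∈ Set.Icc (0 : ℝ) 1, ∀ t ∈ Set.Icc (0 : ℝ) 1, CanMove n (p s) (p t) := by
  have key : ∀ (k : ℕ) (R : Set X) (s t : ℝ), R.Finite → R.ncard + 1 = n → s ∈ Set.Icc (0 : ℝ) 1 →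
      t ∈ Set.Icc (0 : ℝ) 1 → p s ∉ R → p t ∉ R → (R ∩ p '' Set.uIcc s t).ncard = k →
      SetsJoined n (insert (p s) R) (insert (p t) R) := by
    intro k
    induction k using Nat.strong_induction_on with
    | _ k ih =>
    intro R s t hR hn hs ht hsR htR hk
    have hsub : Set.uIcc s t ⊆ Set.Icc 0 1 := Set.uIcc_subset_Icc hs ht
    rcases Set.eq_empty_or_nonempty (R ∩ p '' Set.uIcc s t) with hE | ⟨_, hrR, r, hr, rfl⟩
    · -- nothing is in the way
      subst hn
      obtain ⟨f, hf⟩ := exists_conf hR rfl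
      let q : I → ℝ := fun u => (1 - (u : ℝ)) * s + u * t
      have hqm : ∀ u, q u ∈ Set.uIcc s t := by
        intro u
        rw [← segment_eq_uIcc]
        exact ⟨1 - u, u, by linarith [u.2.2], u.2.1, by ring, by simp [q]⟩
      have hq : Continuous q := by fun_prop
      have hinj' : ∀ u, Function.Injective (Fin.cons (p (q u)) f.1 : Fin (R.ncard + 1) → X) := by
        intro u
        rw [Fin.cons_injective_iff]
        refine ⟨fun h => ?_, f.2⟩
        have : p (q u) ∈ R ∩ p '' Set.uIcc s t := ⟨hf ▸ h, q u, hqm u, rfl⟩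
        rw [hE] at this
        exact this
      let F : I → Conf (R.ncard + 1) X := fun u => ⟨Fin.cons (p (q u)) f.1, hinj' u⟩
      have hF : Continuous F := by
        refine Continuous.subtype_mk (continuous_pi fun i => ?_) _
        refine Fin.cases ?_ (fun i => ?_) i
        · simp only [Fin.cons_zero]
          exact hp.comp_continuous hq fun u => hsub (hqm u)
        · simp only [Fin.cons_succ]
          exact continuous_const
      refine ⟨F 0, F 1, ?_, ?_, ⟨⟨⟨proj _ X ∘ F, continuous_proj.comp hF⟩, rfl, rfl⟩⟩⟩
      · simp [F, q, Fin.range_cons, hf]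
      · simp [F, q, Fin.range_cons, hf]
    · have hr01 := hsub hr
      have hrs : r ≠ s := fun e => hsR (e ▸ hrR)
      have hrt : r ≠ t := fun e => htR (e ▸ hrR)
      have hst : s ≠ t := by
        rintro rfl
        rw [Set.uIcc_self] at hr
        exact hrs hr
      have hfin : (R \ {p r}).Finite := hR.subset Set.sdiff_subset
      have nsr : p s ≠ p r := fun e => hrs (hinj hs hr01 e).symm
      have ntr : p t ≠ p r := fun e => hrt (hinj ht hr01 e).symm
      have nst : p s ≠ p t := fun e => hst (hinj hs ht e)
      have hrt_sub : Set.uIcc r t ⊆ Set.uIcc s t := Set.uIcc_subset_uIcc_right hr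
      have hsr_sub : Set.uIcc s r ⊆ Set.uIcc s t := Set.uIcc_subset_uIcc_left hr
      have hs_not : s ∉ Set.uIcc r t := by
        intro h
        rw [Set.mem_uIcc] at h hr
        rcases h with h | h <;> rcases hr with h' | h'
        · exact hrs (le_antisymm h.1 h'.1)
        · exact hst (le_antisymm h.2 (h'.1.trans h'.2))
        · exact hst (le_antisymm (h'.1.trans h'.2) h.1)
        · exact hrs (le_antisymm h'.2 h.2)
      have ht_not : t ∉ Set.uIcc s r := by
        intro h
        rw [Set.mem_uIcc] at h hr
        rcases h with h | h <;> rcases hr with h' | h'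
        · exact hrt (le_antisymm h'.2 h.2)
        · exact hst (le_antisymm h.1 (h'.1.trans h'.2))
        · exact hst (le_antisymm (h'.1.trans h'.2) h.2)
        · exact hrt (le_antisymm h.1 h'.1)
      have hlt : ∀ z ∈ Set.Icc (0 : ℝ) 1, ∀ A : Set ℝ, A ⊆ Set.uIcc s t → z ∉ A →
          (insert (p z) (R \ {p r}) ∩ p '' A).ncard < k := by
        intro z hz A hA hzA
        rw [← hk]
        refine Set.ncard_lt_ncard ?_ (hR.subset Set.inter_subset_left)
        refine ⟨?_, fun h => ?_⟩
        · rintro _ ⟨hx, a, ha, rfl⟩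
          rcases hx with e | e
          · rw [hinj (hsub (hA ha)) hz e] at ha
            exact absurd ha hzA
          · exact ⟨e.1, a, hA ha, rfl⟩
        · have := h ⟨hrR, r, hr, rfl⟩
          obtain ⟨hx, a, ha, hax⟩ := this
          rcases hx with e | e
          · rw [hinj (hsub (hA ha)) hz (hax.trans e)] at ha
            exact hzA ha
          · exact e.2 rfl
      refine pass_obstruction hrR ?_ ?_
      · refine ih _ (hlt s hs _ hrt_sub hs_not) _ r t (hfin.insert _)
          (by rw [ncard_exchange hR hrR hsR, hn]) hr01 ht ?_ ?_ rfl
        · rintro (e | e)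
          · exact nsr e.symm
          · exact e.2 rfl
        · rintro (e | e)
          · exact nst e.symm
          · exact htR e.1
      · refine ih _ (hlt t ht _ hsr_sub ht_not) _ s r (hfin.insert _)
          (by rw [ncard_exchange hR hrR htR, hn]) hs hr01 ?_ ?_ rfl
        · rintro (e | e)
          · exact nst e
          · exact hsR e.1
        · rintro (e | e)
          · exact ntr e.symm
          · exact e.2 rfl
  intro s hs t ht R hR hn ha hb
  exact key _ R s t hR hn hs ht ha hb rfl

end Sets

section Connected
variable {V : Type} [DecidableEq V] {Γ : SimpleGraph V}

/-- Unordered configuration spaces of a connected graph are path connected. -/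
theorem joined_uconf (hΓ : Γ.Connected) (he : Γ.edgeSet.Nonempty) (n : ℕ)
    (C D : UConf n (realization Γ)) : Joined C D := by
  let e : V → realization Γ := fun v => ⟨basisVec v, basisVec_mem hΓ he v⟩
  have hedge : ∀ u w, ∀ h : Γ.Adj u w, ∀ t : ℝ, ∀ ht : t ∈ Set.Icc (0 : ℝ) 1,
      CanMove n (e u) (⟨edgePt u w t, edgePt_mem h ht.1 ht.2⟩ : realization Γ) := by
    intro u w h t ht
    let p : ℝ → realization Γ := fun r =>
      if hr : r ∈ Set.Icc (0 : ℝ) 1 then ⟨edgePt u w r, edgePt_mem h hr.1 hr.2⟩ else e u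
    have hpv : ∀ r ∈ Set.Icc (0 : ℝ) 1, (p r).1 = edgePt u w r := by
      intro r hr
      simp only [p, dif_pos hr]
    have hp : ContinuousOn p (Set.Icc 0 1) := by
      rw [Topology.IsInducing.subtypeVal.continuousOn_iff]
      exact (continuous_edgePt u w).continuousOn.congr hpv
    have hinj : Set.InjOn p (Set.Icc 0 1) := by
      intro r hr r' hr' hrr
      have := congrArg (fun q => q.1 w) hrr
      simpa only [hpv r hr, hpv r' hr', edgePt_right h.ne] using this
    have := canMove_arc (n := n) hp hinj 0 ⟨le_rfl, zero_le_one⟩ t ht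
    have e0 : p 0 = e u := Subtype.ext (by rw [hpv 0 ⟨le_rfl, zero_le_one⟩, edgePt_zero])
    have e1 : p t = ⟨edgePt u w t, edgePt_mem h ht.1 ht.2⟩ := Subtype.ext (hpv t ht)
    rwa [e0, e1] at this
  have hvert : ∀ u w, CanMove n (e u) (e w) := by
    intro u w
    obtain ⟨q⟩ := hΓ.preconnected u w
    induction q with
    | nil => exact CanMove.refl _
    | cons h _ ih =>
      refine CanMove.trans ?_ ih
      have := hedge _ _ h 1 ⟨zero_le_one, le_rfl⟩
      simpa only [edgePt_one] using this
  have hpt : ∀ a : realization Γ, ∃ u, CanMove n (e u) a := by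
    rintro ⟨a, ha⟩
    obtain ⟨u, w, h, t, h0, h1, rfl⟩ := mem_realization.1 ha
    exact ⟨u, hedge u w h t ⟨h0, h1⟩⟩
  refine joined_of_canMove (fun a b => ?_) C D
  obtain ⟨u, hu⟩ := hpt a
  obtain ⟨w, hw⟩ := hpt b
  exact (hu.symm.trans (hvert u w)).trans hw

end Connected

/-! ### The holonomy attached to a vertex -/

section Holonomy
variable {V : Type} [DecidableEq V] {Γ : SimpleGraph V} {n : ℕ}

/-- The configuration has a particle strictly closest to the vertex `v`, inside its open star. -/
def Lead (v : V) (C : UConf n (realization Γ)) : Prop :=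
  ∃ p ∈ pts C, 0 < p.1 v ∧ ∀ q ∈ pts C, q ≠ p → q.1 v < p.1 v

/-- The particle strictly closest to `v` exists and lies in the interior of the edge `vw`. -/
def LeadOn (v : V) (C : UConf n (realization Γ)) (w : V) : Prop :=
  w ≠ v ∧ ∃ p ∈ pts C, (0 < p.1 v ∧ 0 < p.1 w) ∧ ∀ q ∈ pts C, q ≠ p → q.1 v < p.1 v

theorem isOpen_leading (v : V) {P : realization Γ → Prop} (hP : IsOpen {p | P p}) :
    IsOpen {C : UConf n (realization Γ) |
      ∃ p ∈ pts C, P p ∧ ∀ q ∈ pts C, q ≠ p → q.1 v < p.1 v} := by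
  rw [← isOpenQuotientMap_proj.isQuotientMap.isOpen_preimage]
  have hval : ∀ i, Continuous fun f : Conf n (realization Γ) => (f.1 i).1 v := fun i =>
    (continuous_apply v).comp (continuous_subtype_val.comp
      ((continuous_apply i).comp continuous_subtype_val))
  have : proj n (realization Γ) ⁻¹' {C : UConf n (realization Γ) |
        ∃ p ∈ pts C, P p ∧ ∀ q ∈ pts C, q ≠ p → q.1 v < p.1 v} =
      ⋃ i, ({f | P (f.1 i)} ∩ ⋂ j, ⋂ (_ : j ≠ i), {f | (f.1 j).1 v < (f.1 i).1 v}) := by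
    ext f
    simp only [Set.mem_preimage, Set.mem_ofPred_eq, pts_proj, Set.exists_range_iff,
      Set.forall_mem_range, Set.mem_iUnion, Set.mem_inter_iff, Set.mem_iInter, f.2.ne_iff]
  rw [this]
  refine isOpen_iUnion fun i => IsOpen.inter ?_ (isOpen_iInter_of_finite fun j =>
    isOpen_iInter_of_finite fun _ => isOpen_lt (hval j) (hval i))
  exact hP.preimage ((continuous_apply i).comp continuous_subtype_val)

theorem continuous_coord (v : V) : Continuous fun p : realization Γ => p.1 v :=
  (continuous_apply v).comp continuous_subtype_val

theorem isOpen_lead (v : V) : IsOpen {C : UConf n (realization Γ) | Lead v C} :=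
  isOpen_leading v (isOpen_lt continuous_const (continuous_coord v))

theorem isOpen_leadOn (v w : V) : IsOpen {C : UConf n (realization Γ) | LeadOn v C w} := by
  by_cases h : w = v
  · simp [LeadOn, h]
  · simp only [LeadOn, ne_eq, h, not_false_eq_true, true_and]
    exact isOpen_leading v ((isOpen_lt continuous_const (continuous_coord v)).inter
      (isOpen_lt continuous_const (continuous_coord w)))

theorem isOpen_avoid (v : V) :
    IsOpen {C : UConf n (realization Γ) | ∀ p ∈ pts C, p.1 v < 1} := by
  rw [← isOpenQuotientMap_proj.isQuotientMap.isOpen_preimage]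
  have : proj n (realization Γ) ⁻¹' {C : UConf n (realization Γ) | ∀ p ∈ pts C, p.1 v < 1} =
      ⋂ i, {f | (f.1 i).1 v < 1} := by
    ext f
    simp only [Set.mem_preimage, Set.mem_ofPred_eq, pts_proj, Set.forall_mem_range,
      Set.mem_iInter]
  rw [this]
  exact isOpen_iInter_of_finite fun i => isOpen_lt ((continuous_coord v).comp
    ((continuous_apply i).comp continuous_subtype_val)) continuous_const

theorem LeadOn.unique {v w w' : V} {C : UConf n (realization Γ)} (h : LeadOn v C w)
    (h' : LeadOn v C w') : w = w' := by
  obtain ⟨hw, p, hp, ⟨hpv, hpw⟩, hpm⟩ := h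
  obtain ⟨hw', q, hq, ⟨hqv, hqw⟩, hqm⟩ := h'
  have hpq : p = q := by
    by_contra hne
    exact lt_asymm (hpm q hq (Ne.symm hne)) (hqm p hp hne)
  subst hpq
  obtain ⟨u, hu, t, h0, h1, hpe⟩ := star_form p.2 hpv
  have key : ∀ z, z ≠ v → 0 < p.1 z → z = u := by
    intro z hz hpz
    by_contra hzu
    rw [hpe, edgePt_other hz hzu] at hpz
    exact lt_irrefl _ hpz
  rw [key w hw hpw, key w' hw' hqw]

theorem exists_leadOn {v : V} {C : UConf n (realization Γ)} (h : Lead v C)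
    (h' : ∀ p ∈ pts C, p.1 v < 1) : ∃ w, LeadOn v C w := by
  obtain ⟨p, hp, hpv, hpm⟩ := h
  obtain ⟨u, hu, t, h0, h1, hpe⟩ := star_form p.2 hpv
  refine ⟨u, hu.ne', p, hp, ⟨hpv, ?_⟩, hpm⟩
  have := h' p hp
  rw [hpe, edgePt_left hu.ne] at this
  rw [hpe, edgePt_right hu.ne]
  linarith

theorem lead_or_avoid (v : V) (C : UConf n (realization Γ)) :
    Lead v C ∨ ∀ p ∈ pts C, p.1 v < 1 := by
  by_contra! h
  obtain ⟨h1, p, hp, hpv⟩ := h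
  have hpv1 : p.1 v = 1 := le_antisymm (realization_le_one p.2 v) hpv
  refine h1 ⟨p, hp, by linarith, fun q hq hqp => ?_⟩
  rw [hpv1]
  refine lt_of_le_of_ne (realization_le_one q.2 v) fun e => hqp (Subtype.ext ?_)
  rw [realization_eq_basisVec q.2 e, realization_eq_basisVec p.2 hpv1]

/-- The holonomy at `v` with labels `g` on the edges at `v`: it changes only when a particle passes
through `v` from the edge `vw` to the edge `vw'`, and then by `(g w')⁻¹ * g w`. -/
theorem exists_star_holonomy (Γ : SimpleGraph V) (n : ℕ) (v : V) {G : Type*} [Group G] (g : V → G) :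
    ∃ h : ∀ {x y : UConf n (realization Γ)}, Path.Homotopic.Quotient x y → G,
      (∀ {x y z : UConf n (realization Γ)} (p : Path.Homotopic.Quotient x y)
        (q : Path.Homotopic.Quotient y z), h (p.trans q) = h q * h p) ∧
      (∀ {x y : UConf n (realization Γ)} (γ : Path x y), (∀ t, Lead v (γ t)) → ∀ w w',
        LeadOn v x w → LeadOn v y w' → h (Path.Homotopic.Quotient.mk γ) = (g w')⁻¹ * g w) ∧
      (∀ {x : UConf n (realization Γ)} (γ : Path x x), (∀ t, Lead v (γ t)) →
        h (Path.Homotopic.Quotient.mk γ) = 1) ∧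
      (∀ {x y : UConf n (realization Γ)} (γ : Path x y), (∀ t, ∀ p ∈ pts (γ t), p.1 v < 1) →
        h (Path.Homotopic.Quotient.mk γ) = 1) := by
  let U : Bool → Set (UConf n (realization Γ)) := fun b =>
    if b then {C | Lead v C} else {C | ∀ p ∈ pts C, p.1 v < 1}
  let lab : UConf n (realization Γ) → G := fun C =>
    if h : ∃ w, LeadOn v C w then g h.choose else 1
  have hlab : ∀ C w, LeadOn v C w → lab C = g w := by
    intro C w hw
    have h : ∃ w, LeadOn v C w := ⟨w, hw⟩
    simp only [lab, dif_pos h]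
    rw [h.choose_spec.unique hw]
  have hloc : ∀ C, Lead v C → (∀ p ∈ pts C, p.1 v < 1) → ∀ᶠ D in 𝓝 C, lab D = lab C := by
    intro C h1 h2
    obtain ⟨w, hw⟩ := exists_leadOn h1 h2
    filter_upwards [(isOpen_leadOn v w).mem_nhds hw] with D hD
    rw [hlab D w hD, hlab C w hw]
  obtain ⟨h, hmul, hval⟩ := exists_holonomy U
    (by rintro (_ | _)
        · exact isOpen_avoid v
        · exact isOpen_lead v)
    (by intro C
        rcases lead_or_avoid v C with h | h
        · exact ⟨true, h⟩
        · exact ⟨false, h⟩)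
    (fun b C => if b then lab C else 1)
    (by rintro (_ | _) (_ | _) C ⟨h1, h2⟩
        · simp
        · filter_upwards [hloc C h2 h1] with D hD
          simp [hD]
        · filter_upwards [hloc C h1 h2] with D hD
          simp [hD]
        · simp)
  refine ⟨h, hmul, ?_, ?_, ?_⟩
  · intro x y γ hγ w w' hw hw'
    refine (hval true γ hγ).trans ?_
    simp [hlab x w hw, hlab y w' hw']
  · intro x γ hγ
    refine (hval true γ hγ).trans ?_
    simp
  · intro x y γ hγ
    refine (hval false γ hγ).trans ?_
    simp

end Holonomy

/-! ### Two particles exchanging places at a trivalent vertex -/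

section Star
variable {V : Type} [DecidableEq V] {Γ : SimpleGraph V}

/-- The open ball of radius `1/2` about `v` in the realization. -/
def ballAt (Γ : SimpleGraph V) (v : V) : Set (realization Γ) := {p | 1 / 2 < p.1 v}

/-- The point of the edge `vw` at distance `r` from `v`, with `r` truncated to `[0, 1/4]`. -/
def legPt {v : V} (w : Γ.neighborSet v) (r : ℝ) : ballAt Γ v :=
  ⟨⟨edgePt v w (max 0 (min r (1 / 4))),
    edgePt_mem w.2 (le_max_left _ _) (max_le zero_le_one ((min_le_right _ _).trans (by norm_num)))⟩, by
      have : max 0 (min r (1 / 4)) ≤ (1 / 4 : ℝ) := max_le (by norm_num) (min_le_right _ _)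
      change 1 / 2 < edgePt v w _ v
      rw [edgePt_left w.2.ne]
      linarith⟩

theorem legPt_val {v : V} (w : Γ.neighborSet v) {r : ℝ} (h0 : 0 ≤ r) (h1 : r ≤ 1 / 4) :
    (legPt w r).1.1 = edgePt v w r := by
  simp only [legPt, min_eq_left h1, max_eq_right h0]

theorem legPt_coord {v : V} (w : Γ.neighborSet v) {r : ℝ} (h0 : 0 ≤ r) (h1 : r ≤ 1 / 4) :
    (legPt w r).1.1 v = 1 - r := by
  rw [legPt_val w h0 h1, edgePt_left w.2.ne]

theorem continuous_legPt {v : V} (w : Γ.neighborSet v) : Continuous (legPt w) := by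
  refine Continuous.subtype_mk (Continuous.subtype_mk ?_ _) _
  exact (continuous_edgePt v w).comp (by fun_prop)

theorem legPt_zero {v : V} (w w' : Γ.neighborSet v) : legPt w 0 = legPt w' 0 := by
  apply Subtype.ext
  apply Subtype.ext
  rw [legPt_val w le_rfl (by norm_num), legPt_val w' le_rfl (by norm_num), edgePt_zero, edgePt_zero]

theorem legPt_ne {v : V} {w w' : Γ.neighborSet v} (hw : w ≠ w') {r r' : ℝ} (h0 : 0 < r)
    (h1 : r ≤ 1 / 4) (h0' : 0 ≤ r') (h1' : r' ≤ 1 / 4) : legPt w r ≠ legPt w' r' := by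
  intro h
  have := congrArg (fun p : ballAt Γ v => p.1.1 w.1) h
  simp only [legPt_val w h0.le h1, legPt_val w' h0' h1', edgePt_right w.2.ne] at this
  rw [edgePt_other w.2.ne' (fun e => hw (Subtype.ext e))] at this
  linarith

/-- A pair of distinct points as an ordered configuration. -/
def pair {X : Type} [TopologicalSpace X] (a b : X) (h : a ≠ b) : Conf 2 X :=
  ⟨![a, b], by
    intro i j hij
    fin_cases i <;> fin_cases j <;> simp_all [h.symm]⟩

theorem range_pair {X : Type} [TopologicalSpace X] (a b : X) (h : a ≠ b) :
    Set.range (pair a b h).1 = {a, b} := by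
  simp [pair, Matrix.range_cons, Set.pair_comm]

theorem exists_pair_path {X : Type} [TopologicalSpace X] {P Q : I → X} (hP : Continuous P)
    (hQ : Continuous Q) (h : ∀ t, P t ≠ Q t) {C D : UConf 2 X} (hC : C = proj 2 X (pair (P 0) (Q 0) (h 0)))
    (hD : D = proj 2 X (pair (P 1) (Q 1) (h 1))) :
    ∃ γ : Path C D, ∀ t, pts (γ t) = {P t, Q t} := by
  refine ⟨{ toFun := fun t => proj 2 X (pair (P t) (Q t) (h t)), continuous_toFun := ?_,
            source' := hC.symm, target' := hD.symm }, fun t => ?_⟩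
  · refine continuous_proj.comp (Continuous.subtype_mk (continuous_pi fun i => ?_) _)
    fin_cases i
    · exact hP
    · exact hQ
  · exact range_pair _ _ _

/-- Two particles on the edges `vw` and `vw'` at distances `1/8` and `1/4` from `v`. -/
def twoState {v : V} (w w' : Γ.neighborSet v) (h : w ≠ w') : UConf 2 (ballAt Γ v) :=
  proj 2 _ (pair (legPt w (1 / 8)) (legPt w' (1 / 4))
    (legPt_ne h (by norm_num) (by norm_num) (by norm_num) (by norm_num)))

theorem pts_twoState {v : V} (w w' : Γ.neighborSet v) (h : w ≠ w') :
    pts (twoState w w' h) = {legPt w (1 / 8), legPt w' (1 / 4)} := range_pair _ _ _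

/-- The near particle moves through `v` to another free edge. -/
theorem exists_near_move {v : V} {i j k : Γ.neighborSet v} (hik : i ≠ k) (hjk : j ≠ k) :
    ∃ γ : Path (twoState i k hik) (twoState j k hjk), ∀ t, ∃ p q, pts (γ t) = {p, q} ∧
      q.1.1 v < p.1.1 v := by
  let P : I → ballAt Γ v := fun t =>
    if (t : ℝ) ≤ 1 / 2 then legPt i (1 / 8 - t / 4) else legPt j (t / 4 - 1 / 8)
  have hP : Continuous P := by
    refine Continuous.if_le ((continuous_legPt i).comp (by fun_prop))
      ((continuous_legPt j).comp (by fun_prop)) (by fun_prop) (by fun_prop) fun t ht => ?_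
    rw [ht]
    norm_num
    exact legPt_zero i j
  have hPQ : ∀ t, P t ≠ legPt k (1 / 4) := by
    intro t
    have h0 := t.2.1
    have h1 := t.2.2
    simp only [P]
    split_ifs with h
    · exact (legPt_ne hik.symm (by norm_num) le_rfl (by linarith) (by linarith)).symm
    · exact (legPt_ne hjk.symm (by norm_num) le_rfl (by linarith) (by linarith)).symm
  obtain ⟨γ, hγ⟩ := exists_pair_path (C := twoState i k hik) (D := twoState j k hjk) hP
    (continuous_const (y := legPt k (1 / 4))) hPQ
    (proj_eq_iff_range.2 (by rw [range_pair, range_pair]; norm_num [P]))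
    (proj_eq_iff_range.2 (by rw [range_pair, range_pair]; norm_num [P]))
  refine ⟨γ, fun t => ⟨_, _, hγ t, ?_⟩⟩
  have h0 := t.2.1
  have h1 := t.2.2
  rw [legPt_coord k (by norm_num) le_rfl]
  simp only [P]
  split_ifs with h
  · rw [legPt_coord i (by linarith) (by linarith)]
    linarith
  · rw [legPt_coord j (by linarith) (by linarith)]
    linarith

/-- The two particles exchange their distances from `v`. -/
theorem exists_swap_move {v : V} {i k : Γ.neighborSet v} (hik : i ≠ k) :
    ∃ γ : Path (twoState i k hik) (twoState k i hik.symm), ∀ t, ∀ p ∈ pts (γ t), p.1.1 v < 1 := by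
  obtain ⟨γ, hγ⟩ := exists_pair_path (C := twoState i k hik) (D := twoState k i hik.symm)
    (P := fun t : I => legPt i (1 / 8 + t / 8)) (Q := fun t : I => legPt k (1 / 4 - t / 8))
    ((continuous_legPt i).comp (by fun_prop)) ((continuous_legPt k).comp (by fun_prop))
    (fun t => legPt_ne hik (by linarith [t.2.1]) (by linarith [t.2.2]) (by linarith [t.2.2])
      (by linarith [t.2.1]))
    (proj_eq_iff_range.2 (by rw [range_pair, range_pair]; norm_num))
    (proj_eq_iff_range.2 (by rw [range_pair, range_pair, Set.pair_comm]; norm_num))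
  refine ⟨γ, fun t p hp => ?_⟩
  have h0 := t.2.1
  have h1 := t.2.2
  rw [hγ] at hp
  rcases hp with rfl | rfl
  · rw [legPt_coord i (by linarith) (by linarith)]
    linarith
  · rw [legPt_coord k (by linarith) (by linarith)]
    linarith

end Star

/-! ### Two commuting exchanges -/

/-- Loops in the two factors of a product commute after mapping to a third space. -/
theorem commute_of_prod {X Y Z : Type*} [TopologicalSpace X] [TopologicalSpace Y]
    [TopologicalSpace Z] (F : C(X × Y, Z)) {x : X} {y : Y} (γ : Path x x) (δ : Path y y)
    (h1 : Continuous fun a => F (a, y)) (h2 : Continuous fun b => F (x, b)) :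
    (Path.Homotopic.Quotient.mk (γ.map h1)).trans (Path.Homotopic.Quotient.mk (δ.map h2)) =
    (Path.Homotopic.Quotient.mk (δ.map h2)).trans
      ((Path.Homotopic.Quotient.mk (γ.map h1)) : Path.Homotopic.Quotient (F (x, y)) (F (x, y))) := by
  have e1 : γ.map h1 = (γ.prod (Path.refl y)).map F.continuous := rfl
  have e2 : δ.map h2 = ((Path.refl x).prod δ).map F.continuous := rfl
  have a1 : ((γ.prod (Path.refl y)).trans ((Path.refl x).prod δ)).Homotopic (γ.prod δ) := by
    rw [Path.trans_prod_eq_prod_trans]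
    exact ⟨Path.Homotopic.prodHomotopy (Path.Homotopy.transRefl γ) (Path.Homotopy.reflTrans δ)⟩
  have a2 : (((Path.refl x).prod δ).trans (γ.prod (Path.refl y))).Homotopic (γ.prod δ) := by
    rw [Path.trans_prod_eq_prod_trans]
    exact ⟨Path.Homotopic.prodHomotopy (Path.Homotopy.reflTrans γ) (Path.Homotopy.transRefl δ)⟩
  rw [e1, e2, ← Path.Homotopic.Quotient.mk_trans, ← Path.Homotopic.Quotient.mk_trans,
    ← Path.map_trans, ← Path.map_trans]
  exact Quotient.sound ((a1.trans a2.symm).map F)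

section Exchange
variable {V : Type} [DecidableEq V] {Γ : SimpleGraph V}

/-- At a vertex with three distinct edges, two particles can follow a loop with nontrivial
holonomy, whatever the other particles are, as long as these stay away from the vertex. -/
theorem exists_exchange_loop {v : V} {i j k : Γ.neighborSet v} (hij : i ≠ j) (hik : i ≠ k)
    (hjk : j ≠ k) :
    ∃ γ : Path (twoState i j hij) (twoState i j hij),
      ∀ {n : ℕ} (F : UConf 2 (ballAt Γ v) → UConf n (realization Γ)) (hF : Continuous F)
        (R : Set (realization Γ)), (∀ C, pts (F C) = Subtype.val '' pts C ∪ R) →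
        (∀ p ∈ R, p.1 v ≤ 1 / 2) →
        ∃ Φ : FundamentalGroup (UConf n (realization Γ)) (F (twoState i j hij)) →* FreeGroup Bool,
          (∀ δ : Path (F (twoState i j hij)) (F (twoState i j hij)), (∀ t, Lead v (δ t)) →
            Φ (FundamentalGroup.fromPath (Path.Homotopic.Quotient.mk δ)) = 1) ∧
          Φ (FundamentalGroup.fromPath (Path.Homotopic.Quotient.mk (γ.map hF))) ≠ 1 := by
  -- with (near edge, far edge) as state, the loop is
  -- (i, j) → (k, j) → (j, k) → (i, k) → (k, i) → (j, i) → (i, j)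
  obtain ⟨m1, h1⟩ := exists_near_move hij hjk.symm
  obtain ⟨m2, h2⟩ := exists_swap_move hjk.symm
  obtain ⟨m3, h3⟩ := exists_near_move hjk hik
  obtain ⟨m4, h4⟩ := exists_swap_move hik
  obtain ⟨m5, h5⟩ := exists_near_move hik.symm hij.symm
  obtain ⟨m6, h6⟩ := exists_swap_move hij.symm
  refine ⟨m1.trans (m2.trans (m3.trans (m4.trans (m5.trans m6)))), ?_⟩
  intro n F hF R hpts hR
  let g : V → FreeGroup Bool := fun w =>
    if w = j then (FreeGroup.of true)⁻¹ else if w = k then FreeGroup.of false else 1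
  obtain ⟨h, hmul, hlead, hloop, havoid⟩ := exists_star_holonomy Γ n v g
  have lead : ∀ C (p q : ballAt Γ v), pts C = {p, q} → q.1.1 v < p.1.1 v →
      ∀ r ∈ pts (F C), r ≠ p.1 → r.1 v < p.1.1 v := by
    intro C p q hC hqp r hr hrp
    rw [hpts, hC] at hr
    rcases hr with ⟨r, rfl | rfl, rfl⟩ | hr
    · exact absurd rfl hrp
    · exact hqp
    · exact (hR r hr).trans_lt p.2
  have hLead : ∀ C (p q : ballAt Γ v), pts C = {p, q} → q.1.1 v < p.1.1 v → Lead v (F C) := by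
    intro C p q hC hqp
    refine ⟨p.1, ?_, ?_, lead C p q hC hqp⟩
    · rw [hpts, hC]
      exact Or.inl ⟨p, Or.inl rfl, rfl⟩
    · have : 1 / 2 < p.1.1 v := p.2
      linarith
  have hLeadOn : ∀ (a b : Γ.neighborSet v) (hab : a ≠ b), LeadOn v (F (twoState a b hab)) a := by
    intro a b hab
    refine ⟨a.2.ne', (legPt a (1 / 8)).1, ?_, ⟨?_, ?_⟩, ?_⟩
    · rw [hpts, pts_twoState]
      exact Or.inl ⟨_, Or.inl rfl, rfl⟩
    · rw [legPt_coord a (by norm_num) (by norm_num)]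
      norm_num
    · rw [legPt_val a (by norm_num) (by norm_num), edgePt_right a.2.ne]
      norm_num
    · refine lead _ _ _ (pts_twoState a b hab) ?_
      rw [legPt_coord a (by norm_num) (by norm_num), legPt_coord b (by norm_num) (by norm_num)]
      norm_num
  have near : ∀ {a b c : Γ.neighborSet v} (hac : a ≠ c) (hbc : b ≠ c)
      (m : Path (twoState a c hac) (twoState b c hbc)),
      (∀ t, ∃ p q, pts (m t) = {p, q} ∧ q.1.1 v < p.1.1 v) →
      h (Path.Homotopic.Quotient.mk (m.map hF)) = (g b)⁻¹ * g a := by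
    intro a b c hac hbc m hm
    refine hlead _ (fun t => ?_) a b (hLeadOn a c hac) (hLeadOn b c hbc)
    obtain ⟨p, q, h1, h2⟩ := hm t
    exact hLead _ p q h1 h2
  have swap : ∀ {C D : UConf 2 (ballAt Γ v)} (m : Path C D),
      (∀ t, ∀ p ∈ pts (m t), p.1.1 v < 1) → h (Path.Homotopic.Quotient.mk (m.map hF)) = 1 := by
    intro C D m hm
    refine havoid _ (fun t p hp => ?_)
    change p ∈ pts (F (m t)) at hp
    rw [hpts] at hp
    rcases hp with ⟨r, hr, rfl⟩ | hr
    · exact hm t r hr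
    · exact (hR p hr).trans_lt (by norm_num)
  refine ⟨MonoidHom.mk' (fun p => h (x := F (twoState i j hij)) (y := F (twoState i j hij)) p)
    (fun p q => hmul (x := F (twoState i j hij)) (y := F (twoState i j hij))
      (z := F (twoState i j hij)) q p), fun δ hδ => hloop δ hδ, ?_⟩
  change h (Path.Homotopic.Quotient.mk _) ≠ 1
  simp only [Path.map_trans, Path.Homotopic.Quotient.mk_trans, hmul]
  rw [near _ _ m1 h1, near _ _ m3 h3, near _ _ m5 h5, swap m2 h2, swap m4 h4, swap m6 h6]
  have gi : g i = 1 := by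
    simp only [g]
    rw [if_neg (fun e => hij (Subtype.ext e)), if_neg (fun e => hik (Subtype.ext e))]
  have gj : g j = (FreeGroup.of true)⁻¹ := by simp [g]
  have gk : g k = FreeGroup.of false := by
    simp only [g]
    rw [if_neg (fun e => hjk (Subtype.ext e.symm)), if_pos trivial]
  rw [gi, gj, gk]
  have := freeGroup_commutator_ne_one (T := Bool) (a := true) (b := false) (by decide)
  simpa [mul_assoc] using this

end Exchange

section NotFree
variable {V : Type} [DecidableEq V] {Γ : SimpleGraph V}

theorem exists_three {v : V} (h : 3 ≤ (Γ.neighborSet v).ncard) :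
    ∃ i j k : Γ.neighborSet v, i ≠ j ∧ i ≠ k ∧ j ≠ k := by
  obtain ⟨t, ht, hc⟩ := Set.exists_subset_card_eq h
  obtain ⟨a, b, c, hab, hac, hbc, rfl⟩ := Set.ncard_eq_three.1 hc
  refine ⟨⟨a, ht (by simp)⟩, ⟨b, ht (by simp)⟩, ⟨c, ht (by simp)⟩, ?_, ?_, ?_⟩ <;>
    simpa [Subtype.ext_iff]

theorem coord_add_le {v v' : V} (hv : v ≠ v') {p : V → ℝ} (hp : p ∈ realization Γ) :
    p v + p v' ≤ 1 := by
  obtain ⟨a, b, hab, t, h0, h1, rfl⟩ := mem_realization.1 hp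
  have := hab.ne
  simp only [edgePt_apply]
  split_ifs <;> first | linarith | (exfalso; grind)

/-- Configurations of two particles near `v`, two near `v'`, and the remaining particles at the
fixed positions `s` away from both vertices. -/
theorem exists_placement {v v' : V} (hv : v ≠ v') {m n : ℕ} (hn : n = 2 + 2 + m)
    (s : Fin m → realization Γ) (hs : Function.Injective s) (h1 : ∀ i, (s i).1 v ≤ 1 / 2)
    (h2 : ∀ i, (s i).1 v' ≤ 1 / 2) :
    ∃ F : C(UConf 2 (ballAt Γ v) × UConf 2 (ballAt Γ v'), UConf n (realization Γ)),
      ∀ C D, pts (F (C, D)) = Subtype.val '' pts C ∪ Subtype.val '' pts D ∪ Set.range s := by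
  let e : Fin n ≃ (Fin 2 ⊕ Fin 2) ⊕ Fin m := Fintype.equivOfCardEq (by simp [hn])
  let a : Conf 2 (ballAt Γ v) × Conf 2 (ballAt Γ v') → (Fin 2 ⊕ Fin 2) ⊕ Fin m → realization Γ :=
    fun x => Sum.elim (Sum.elim (fun i => (x.1.1 i).1) (fun i => (x.2.1 i).1)) s
  have ha : ∀ x, Function.Injective (a x) := by
    intro x
    refine Function.Injective.sumElim (Function.Injective.sumElim
      (Subtype.val_injective.comp x.1.2) (Subtype.val_injective.comp x.2.2) ?_) hs ?_
    · intro i j hij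
      have e1 : 1 / 2 < (x.1.1 i).1.1 v := (x.1.1 i).2
      have e2 : 1 / 2 < (x.2.1 j).1.1 v' := (x.2.1 j).2
      have e3 := coord_add_le hv (x.1.1 i).1.2
      rw [← hij] at e2
      linarith
    · rintro (i | i) j hij
      · have e1 : 1 / 2 < (x.1.1 i).1.1 v := (x.1.1 i).2
        have e2 := h1 j
        rw [← hij] at e2
        exact absurd e1 (not_lt.2 e2)
      · have e1 : 1 / 2 < (x.2.1 i).1.1 v' := (x.2.1 i).2
        have e2 := h2 j
        rw [← hij] at e2
        exact absurd e1 (not_lt.2 e2)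
  let G : Conf 2 (ballAt Γ v) × Conf 2 (ballAt Γ v') → Conf n (realization Γ) := fun x =>
    ⟨a x ∘ e, (ha x).comp e.injective⟩
  have hG : Continuous G := by
    refine Continuous.subtype_mk (continuous_pi fun i => ?_) _
    change Continuous fun x => a x (e i)
    rcases e i with (k | k) | k
    · exact continuous_subtype_val.comp ((continuous_apply k).comp
        (continuous_subtype_val.comp continuous_fst))
    · exact continuous_subtype_val.comp ((continuous_apply k).comp
        (continuous_subtype_val.comp continuous_snd))
    · exact continuous_const
  have hrange : ∀ x, Set.range (G x).1 = Subtype.val '' pts (proj 2 _ x.1) ∪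
      Subtype.val '' pts (proj 2 _ x.2) ∪ Set.range s := by
    intro x
    change Set.range (a x ∘ e) = _
    rw [e.surjective.range_comp, Set.Sum.elim_range, Set.Sum.elim_range, pts_proj, pts_proj,
      ← Set.range_comp, ← Set.range_comp]
    rfl
  have hq : IsOpenQuotientMap (Prod.map (proj 2 (ballAt Γ v)) (proj 2 (ballAt Γ v'))) :=
    isOpenQuotientMap_proj.prodMap isOpenQuotientMap_proj
  choose sec hsec using hq.surjective
  have hF : ∀ x, proj n _ (G (sec (Prod.map (proj 2 _) (proj 2 _) x))) = proj n _ (G x) := by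
    intro x
    rw [proj_eq_iff_range, hrange, hrange]
    have := hsec (Prod.map (proj 2 (ballAt Γ v)) (proj 2 (ballAt Γ v')) x)
    exact congrArg (fun y : UConf 2 (ballAt Γ v) × UConf 2 (ballAt Γ v') =>
      Subtype.val '' pts y.1 ∪ Subtype.val '' pts y.2 ∪ Set.range s) this
  refine ⟨⟨fun y => proj n _ (G (sec y)), hq.isQuotientMap.continuous_iff.2 ?_⟩, fun C D => ?_⟩
  · exact (continuous_proj.comp hG).congr fun x => (hF x).symm
  · change Set.range (G (sec (C, D))).1 = _
    rw [hrange]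
    have := hsec (C, D)
    exact congrArg (fun y : UConf 2 (ballAt Γ v) × UConf 2 (ballAt Γ v') =>
      Subtype.val '' pts y.1 ∪ Subtype.val '' pts y.2 ∪ Set.range s) this

/-- If two particles are at rest near `v`, at distinct distances, the motion of particles outside the
ball about `v` does not change which particle is closest to `v`. -/
theorem lead_of_other {v : V} {i j : Γ.neighborSet v} (hij : i ≠ j) {n : ℕ}
    {E : UConf n (realization Γ)} {R : Set (realization Γ)}
    (hE : pts E = Subtype.val '' pts (twoState i j hij) ∪ R) (hR : ∀ p ∈ R, p.1 v ≤ 1 / 2) :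
    Lead v E := by
  have c1 := legPt_coord i (r := 1 / 8) (by norm_num) (by norm_num)
  have c2 := legPt_coord j (r := 1 / 4) (by norm_num) (by norm_num)
  refine ⟨(legPt i (1 / 8)).1, ?_, ?_, ?_⟩
  · rw [hE, pts_twoState]
    exact Or.inl ⟨_, Or.inl rfl, rfl⟩
  · rw [c1]
    norm_num
  · intro q hq hne
    rw [c1]
    rw [hE, pts_twoState] at hq
    rcases hq with ⟨r, rfl | rfl, rfl⟩ | hr
    · exact absurd rfl hne
    · rw [c2]
      norm_num
    · exact (hR q hr).trans_lt (by norm_num)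

/-- Two vertices of degree at least three carry commuting exchange loops, which are not powers of a
common element of the braid group. -/
theorem not_free_of_two_essential (hΓ : Γ.Connected) (he : Γ.edgeSet.Nonempty) {n : ℕ} (hn : 4 ≤ n)
    {v v' : V} (hvv' : v ≠ v') (hv : 3 ≤ (Γ.neighborSet v).ncard)
    (hv' : 3 ≤ (Γ.neighborSet v').ncard) (x : UConf n (realization Γ)) :
    ¬ IsFreeGroupType (FundamentalGroup (UConf n (realization Γ)) x) := by
  obtain ⟨i, j, k, hij, hik, hjk⟩ := exists_three hv
  obtain ⟨i', j', k', hij', hik', hjk'⟩ := exists_three hv'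
  obtain ⟨w, hw⟩ : ∃ w : Γ.neighborSet v, w.1 ≠ v' := by
    by_cases h : i.1 = v'
    · exact ⟨j, fun e => hij (Subtype.ext (h.trans e.symm))⟩
    · exact ⟨i, h⟩
  obtain ⟨m, hm⟩ : ∃ m, n = 2 + 2 + m := ⟨n - 4, by omega⟩
  -- the remaining particles sit on the edge `vw`, in the half further from `v`
  let τ : Fin m → ℝ := fun l => 1 - 1 / ((l : ℝ) + 2)
  have hτ : ∀ l, 1 / 2 ≤ τ l ∧ τ l ≤ 1 := by
    intro l
    have h0 : (0 : ℝ) ≤ (l : ℝ) := Nat.cast_nonneg _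
    have h1 : 1 / ((l : ℝ) + 2) ≤ 1 / 2 := one_div_le_one_div_of_le (by norm_num) (by linarith)
    have h2 : 0 < 1 / ((l : ℝ) + 2) := by positivity
    simp only [τ]
    constructor <;> linarith
  let s : Fin m → realization Γ := fun l =>
    ⟨edgePt v w (τ l), edgePt_mem w.2 (by linarith [(hτ l).1]) (hτ l).2⟩
  have hs : Function.Injective s := by
    intro l l' h
    have h1 := congrArg (fun p => p.1 w.1) h
    simp only [s, edgePt_right w.2.ne] at h1
    simp only [τ, sub_right_inj, one_div, inv_inj, add_left_inj, Nat.cast_inj] at h1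
    exact Fin.ext h1
  have hs1 : ∀ l, (s l).1 v ≤ 1 / 2 := by
    intro l
    simp only [s, edgePt_left w.2.ne]
    linarith [(hτ l).1]
  have hs2 : ∀ l, (s l).1 v' ≤ 1 / 2 := by
    intro l
    simp only [s, edgePt_other hvv'.symm hw.symm]
    norm_num
  obtain ⟨F, hF⟩ := exists_placement hvv' hm s hs hs1 hs2
  obtain ⟨α, hα⟩ := exists_exchange_loop hij hik hjk
  obtain ⟨β, hβ⟩ := exists_exchange_loop hij' hik' hjk'
  have hb : ∀ p ∈ ballAt Γ v, p.1 v' ≤ 1 / 2 := by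
    intro p hp
    have := coord_add_le hvv' p.2
    have hp : 1 / 2 < p.1 v := hp
    linarith
  have hb' : ∀ p ∈ ballAt Γ v', p.1 v ≤ 1 / 2 := by
    intro p hp
    have := coord_add_le hvv' p.2
    have hp : 1 / 2 < p.1 v' := hp
    linarith
  have F1 : Continuous fun C => F (C, twoState i' j' hij') := by fun_prop
  have F2 : Continuous fun D => F (twoState i j hij, D) := by fun_prop
  have R1 : ∀ D : UConf 2 (ballAt Γ v'), ∀ p ∈ Subtype.val '' pts D ∪ Set.range s,
      p.1 v ≤ 1 / 2 := by
    rintro D p (⟨q, _, rfl⟩ | ⟨l, rfl⟩)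
    · exact hb' q.1 q.2
    · exact hs1 l
  have R2 : ∀ C : UConf 2 (ballAt Γ v), ∀ p ∈ Subtype.val '' pts C ∪ Set.range s,
      p.1 v' ≤ 1 / 2 := by
    rintro C p (⟨q, _, rfl⟩ | ⟨l, rfl⟩)
    · exact hb q.1 q.2
    · exact hs2 l
  have hF' : ∀ C D, pts (F (C, D)) = Subtype.val '' pts D ∪ (Subtype.val '' pts C ∪ Set.range s) := by
    intro C D
    rw [hF, Set.union_left_comm, Set.union_assoc]
  obtain ⟨Φ, hΦ, hΦα⟩ := hα (fun C => F (C, twoState i' j' hij')) F1 _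
    (fun C => (hF C _).trans (Set.union_assoc _ _ _)) (R1 _)
  obtain ⟨Ψ, hΨ, hΨβ⟩ := hβ (fun D => F (twoState i j hij, D)) F2 _ (fun D => hF' _ D) (R2 _)
  obtain ⟨δ⟩ := joined_uconf hΓ he n x (F (twoState i j hij, twoState i' j' hij'))
  rintro ⟨S, ⟨φ⟩⟩
  have hnot := not_free_of_commute Φ Ψ
    (α := FundamentalGroup.fromPath (Path.Homotopic.Quotient.mk (α.map F1)))
    (β := FundamentalGroup.fromPath (Path.Homotopic.Quotient.mk (β.map F2)))
    (commute_of_prod F α β F1 F2).symm hΦα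
    (hΦ _ fun t => lead_of_other hij (E := F (twoState i j hij, β t))
      ((hF _ _).trans (Set.union_assoc _ _ _)) (R1 _)) hΨβ
  exact hnot ⟨S, ⟨(FundamentalGroup.fundamentalGroupMulEquivOfPath δ).symm.trans φ⟩⟩

end NotFree

end Auxiliary

/-- For a finite connected simple graph `Γ` with at least one edge and
`n ≥ 4`, the graph `n`-braid group `B_n(Γ)` is isomorphic to a free group if and only if
`Γ` has at most one vertex of degree at least 3. -/
theorem braidN_free_iff_at_most_one_essential_vertex
    (V : Type) [Fintype V] [DecidableEq V] (Γ : SimpleGraph V)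
    (hconn : Γ.Connected) (hedge : Γ.edgeSet.Nonempty)
    (n : ℕ) (hn : 4 ≤ n)
    (x : UConf n ↥(realization Γ)) :
    IsFreeGroupType (FundamentalGroup (UConf n ↥(realization Γ)) x) ↔
      {v : V | 3 ≤ (Γ.neighborSet v).ncard}.Subsingleton := by
  constructor
  · intro hfree v hv v' hv'
    by_contra hne
    exact not_free_of_two_essential hconn hedge hn hne hv hv' x hfree
  · intro hsub
    obtain ⟨v, hv⟩ : ∃ v : V, ∀ w, w ≠ v → (Γ.neighborSet w).ncard ≤ 2 := by
      rcases hsub.eq_empty_or_singleton with h | ⟨v, h⟩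
      · obtain ⟨v⟩ := hconn.nonempty
        refine ⟨v, fun w _ => ?_⟩
        by_contra! hw
        exact (h ▸ (show w ∈ {v : V | 3 ≤ (Γ.neighborSet v).ncard} from hw) : w ∈ (∅ : Set V))
      · refine ⟨v, fun w hwv => ?_⟩
        by_contra! hw
        exact hwv (h ▸ (show w ∈ {v : V | 3 ≤ (Γ.neighborSet v).ncard} from hw) : w ∈ ({v} : Set V))
    obtain ⟨m, rfl⟩ : ∃ m, n = m + 2 := ⟨n - 2, by omega⟩
    exact free_of_degree hconn hedge v hv m x

end GraphBraid
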